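/- Suppose (w0, w1) is a smooth solution of the radial tt* system (case 4a) on (0, ∞) such that w0(r) → 0 and w1(r) → 0 as r → ∞ and 2·w0(r)/ln r → 3 and 2·w1(r)/ln r → 1 as r → 0⁺ (the vertex case V1, (γ0, γ1) = (3, 1)). Then, with s = ln r, the fine structure near r = 0 holds: 2·w0(r) − 3·ln r − ln P3(s) → 0 and 2·w0(r) + 2·w1(r) − 4·ln r − ln P4(s) → 0 as r → 0⁺, where γ is the Euler–Mascheroni constant, ζ(3) = Σ_{n≥1} 1/n³, P3(s) = −(4/3)(s − ln 4)³ − 4γ(s − ln 4)² − 4γ²(s − ln 4) − ζ(3)/24 − (4/3)γ³, and P4(s) = (4/3)(s − ln 4)⁴ + (16/3)γ(s − ln 4)³ + 8γ²(s − ln 4)² + ((16γ³)/3 − ζ(3)/12)(s − ln 4) − γ·ζ(3)/12 + (4/3)γ⁴. -/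

import Mathlib

open Real Filter

/-- The radial tt* system (case 4a). -/
def IsRadialTTStar (w0 w1 : ℝ → ℝ) : Prop :=
  ∀ r : ℝ, 0 < r →
    (1/2) * deriv (deriv w0) r + (1/(2*r)) * deriv w0 r
        = Real.exp (4 * w0 r) - Real.exp (2 * w1 r - 2 * w0 r) ∧
    (1/2) * deriv (deriv w1) r + (1/(2*r)) * deriv w1 r
        = Real.exp (2 * w1 r - 2 * w0 r) - Real.exp (-(4 * w1 r))

/-- `ζ(3) = Σ_{n ≥ 1} 1/n³`. -/
noncomputable def zetaThree : ℝ := ∑' n : ℕ, 1 / ((n : ℝ) + 1)^3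

/-- The cubic polynomial `P3` of the V1 fine structure (in `s = ln r`). -/
noncomputable def P3V1 (s : ℝ) : ℝ :=
  -(4/3) * (s - Real.log 4)^3 - 4 * Real.eulerMascheroniConstant * (s - Real.log 4)^2
    - 4 * Real.eulerMascheroniConstant^2 * (s - Real.log 4)
    - zetaThree / 24 - (4/3) * Real.eulerMascheroniConstant^3

/-- The quartic polynomial `P4` of the V1 fine structure (in `s = ln r`). -/
noncomputable def P4V1 (s : ℝ) : ℝ :=
  (4/3) * (s - Real.log 4)^4 + (16/3) * Real.eulerMascheroniConstant * (s - Real.log 4)^3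
    + 8 * Real.eulerMascheroniConstant^2 * (s - Real.log 4)^2
    + ((16 * Real.eulerMascheroniConstant^3)/3 - zetaThree / 12) * (s - Real.log 4)
    - Real.eulerMascheroniConstant * zetaThree / 12 + (4/3) * Real.eulerMascheroniConstant^4

section odepart

lemma tt_lin_ode {E : Type*} [NormedAddCommGroup E] [NormedSpace ℝ E] [CompleteSpace E]
    (B : ℝ → E →L[ℝ] E) (hB : Continuous B) (t0 : ℝ) (v : E) :
    ∃ y : ℝ → E, y t0 = v ∧ ∀ t, HasDerivAt y (B t (y t)) t := by
  let P : ℕ → ℝ → E := fun n => Nat.rec (fun _ => v) (fun _ p t => ∫ τ in t0..t, B τ (p τ)) n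
  have P0 : P 0 = fun _ => v := rfl
  have PS : ∀ n, P (n+1) = fun t => ∫ τ in t0..t, B τ (P n τ) := fun n => rfl
  have Pc : ∀ n, Continuous (P n) := by
    intro n
    induction n with
    | zero => rw [P0]; exact continuous_const
    | succ n ih =>
      rw [PS]
      have : Continuous (fun τ => B τ (P n τ)) := hB.clm_apply ih
      exact intervalIntegral.continuous_primitive (fun a b => this.intervalIntegrable a b) t0
  have Pd : ∀ n t, HasDerivAt (P (n+1)) (B t (P n t)) t := by
    intro n t
    rw [PS]
    have : Continuous (fun τ => B τ (P n τ)) := hB.clm_apply (Pc n)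
    exact intervalIntegral.integral_hasDerivAt_right (this.intervalIntegrable _ _)
      (this.stronglyMeasurableAtFilter _ _) this.continuousAt
  -- bounds
  have bnd : ∀ T : ℝ, ∃ K : ℝ, 0 ≤ K ∧ ∀ t, |t - t0| ≤ T → ‖B t‖ ≤ K := by
    intro T
    obtain ⟨K, hK⟩ := (isCompact_Icc (a := t0 - T) (b := t0 + T)).exists_bound_of_continuousOn
      hB.continuousOn
    refine ⟨max K 0, le_max_right _ _, fun t ht => le_max_of_le_left (hK t ?_)⟩
    rw [abs_le] at ht
    constructor <;> linarith [ht.1, ht.2]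
  have Pb : ∀ T K : ℝ, 0 ≤ K → (∀ t, |t - t0| ≤ T → ‖B t‖ ≤ K) → ∀ n t, |t - t0| ≤ T →
      ‖P n t‖ ≤ ‖v‖ * K ^ n * |t - t0| ^ n / n.factorial := by
    intro T K hK0 hK n
    induction n with
    | zero => intro t ht; simp [P0]
    | succ n ih =>
      intro t ht
      rw [PS]
      have h1 : ‖∫ τ in t0..t, B τ (P n τ)‖ ≤
          ∫ τ in Set.uIoc t0 t, (‖v‖ * K ^ (n+1) / n.factorial) * |τ - t0| ^ n := by
        rw [intervalIntegral.norm_intervalIntegral_eq]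
        apply MeasureTheory.norm_integral_le_of_norm_le
        · apply Continuous.integrableOn_uIoc
          fun_prop
        · filter_upwards [MeasureTheory.ae_restrict_mem measurableSet_uIoc] with τ hτ
          have hτ' : |τ - t0| ≤ T := by
            refine le_trans ?_ ht
            exact Set.abs_sub_left_of_mem_uIcc (Set.uIoc_subset_uIcc hτ)
          calc ‖B τ (P n τ)‖ ≤ ‖B τ‖ * ‖P n τ‖ := (B τ).le_opNorm _
            _ ≤ K * (‖v‖ * K ^ n * |τ - t0| ^ n / n.factorial) := by
              gcongr
              · exact hK τ hτ'
              · exact ih τ hτ'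
            _ = _ := by ring
      refine h1.trans (le_of_eq ?_)
      rw [MeasureTheory.integral_const_mul, integral_pow_abs_sub_uIoc, Nat.factorial_succ]
      push_cast
      field_simp
  -- summability
  refine ⟨fun t => ∑' n, P n t, ?_, ?_⟩
  · beta_reduce
    rw [tsum_eq_single 0 (fun n hn => by
      obtain ⟨m, rfl⟩ := Nat.exists_eq_succ_of_ne_zero hn
      show P (m+1) t0 = 0
      rw [PS]; simp)]
    rw [P0]
  · intro t
    set T := |t - t0| + 1 with hT
    obtain ⟨K, hK0, hK⟩ := bnd T
    have hb := Pb T K hK0 hK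
    let g : ℕ → ℝ → E := fun n t => Nat.casesOn n 0 (fun m => B t (P m t))
    let u0 : ℕ → ℝ := fun n => ‖v‖ * ((K * T) ^ n / n.factorial)
    let u : ℕ → ℝ := fun n => Nat.casesOn n 0 (fun m => K * u0 m)
    have hT0 : 0 ≤ T := by positivity
    have hu0 : Summable u0 := (Real.summable_pow_div_factorial (K * T)).mul_left _
    have hu : Summable u := by
      rw [← summable_nat_add_iff 1]
      exact hu0.mul_left K
    have hPu : ∀ n s, |s - t0| ≤ T → ‖P n s‖ ≤ u0 n := by
      intro n s hs
      refine (hb n s hs).trans ?_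
      have : ‖v‖ * K ^ n * |s - t0| ^ n / n.factorial ≤ ‖v‖ * K ^ n * T ^ n / n.factorial := by
        gcongr
      refine this.trans (le_of_eq ?_)
      simp only [u0]; ring
    have hset : ∀ s ∈ Set.Ioo (t0 - T) (t0 + T), |s - t0| ≤ T := by
      intro s hs
      rw [abs_le]; constructor <;> linarith [hs.1, hs.2]
    have htm : t ∈ Set.Ioo (t0 - T) (t0 + T) := by
      have := abs_lt.mp (show |t - t0| < T by linarith)
      constructor <;> linarith [this.1, this.2]
    have hPs : ∀ s, |s - t0| ≤ T → Summable (fun n => P n s) := fun s hs =>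
      Summable.of_norm_bounded hu0 (fun n => hPu n s hs)
    have main := hasDerivAt_tsum_of_isPreconnected (g := P) (g' := g) (u := u) hu
      (t := Set.Ioo (t0 - T) (t0 + T)) isOpen_Ioo (isPreconnected_Ioo)
      (by
        intro n s hs
        cases n with
        | zero => exact hasDerivAt_const s v
        | succ m => exact Pd m s)
      (by
        intro n s hs
        cases n with
        | zero => simp [g, u]
        | succ m =>
          show ‖B s (P m s)‖ ≤ K * u0 m
          refine ((B s).le_opNorm _).trans ?_
          gcongr
          · exact hK s (hset s hs)
          · exact hPu m s (hset s hs))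
      htm (hPs t (hset t htm)) htm
    have e : ∑' n, g n t = B t (∑' n, P n t) := by
      rw [(B t).map_tsum (hPs t (hset t htm))]
      have hs : Summable (fun n => g n t) := by
        rw [← summable_nat_add_iff 1]
        exact (hPs t (hset t htm)).mapL (B t)
      rw [hs.tsum_eq_zero_add]
      simp [g]
    rw [e] at main
    exact main

lemma tt_gron_right {E : Type*} [NormedAddCommGroup E] [NormedSpace ℝ E]
    (f f' : ℝ → E) (t0 T K ε δ : ℝ) (hK : 1 ≤ K) (hε : 0 ≤ ε) (hδ : 0 ≤ δ)
    (hf : ∀ t, HasDerivAt f (f' t) t)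
    (hb : ∀ t, |t - t0| ≤ T → ‖f' t‖ ≤ K * ‖f t‖ + ε) (h0 : ‖f t0‖ ≤ δ) (t : ℝ) (ht0 : t0 ≤ t)
    (ht : |t - t0| ≤ T) : ‖f t‖ ≤ (δ + ε) * Real.exp (K * T) := by
  have hle : t - t0 ≤ T := (le_abs_self _).trans ht
  have := norm_le_gronwallBound_of_norm_deriv_right_le (f := f) (f' := f') (δ := δ) (K := K) (ε := ε)
    (a := t0) (b := t0 + T) (fun x _ => (hf x).continuousAt.continuousWithinAt)
    (fun x _ => (hf x).hasDerivWithinAt) h0 (fun x hx => hb x (by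
      rw [abs_le]; constructor <;> linarith [hx.1, hx.2])) t ⟨ht0, by linarith⟩
  refine this.trans ?_
  rw [gronwallBound_of_K_ne_0 (by linarith)]
  have h1 : Real.exp (K * (t - t0)) ≤ Real.exp (K * T) := by
    apply Real.exp_le_exp.mpr
    apply mul_le_mul_of_nonneg_left hle (by linarith)
  have h2 : ε / K ≤ ε := div_le_self hε hK
  have h3 : 1 ≤ Real.exp (K * (t - t0)) := Real.one_le_exp (mul_nonneg (by linarith) (by linarith))
  have h4 : 0 ≤ ε / K := by positivity
  have h5 : ε / K * (Real.exp (K * (t - t0)) - 1) ≤ ε * (Real.exp (K * T)) := by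
    apply mul_le_mul h2 _ (by linarith) hε
    linarith
  have h6 := mul_le_mul_of_nonneg_left h1 hδ
  linarith

lemma tt_gron {E : Type*} [NormedAddCommGroup E] [NormedSpace ℝ E]
    (f f' : ℝ → E) (t0 T K ε δ : ℝ) (hK : 1 ≤ K) (hε : 0 ≤ ε) (hδ : 0 ≤ δ)
    (hf : ∀ t, HasDerivAt f (f' t) t)
    (hb : ∀ t, |t - t0| ≤ T → ‖f' t‖ ≤ K * ‖f t‖ + ε) (h0 : ‖f t0‖ ≤ δ) (t : ℝ)
    (ht : |t - t0| ≤ T) : ‖f t‖ ≤ (δ + ε) * Real.exp (K * T) := by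
  rcases le_total t0 t with h | h
  · exact tt_gron_right f f' t0 T K ε δ hK hε hδ hf hb h0 t h ht
  · have := tt_gron_right (fun s => f (-s)) (fun s => -f' (-s)) (-t0) T K ε δ hK hε hδ
      (fun s => by
        have := (hf (-s)).scomp s (hasDerivAt_neg s)
        simpa [Function.comp_def] using this)
      (fun s hs => by
        rw [norm_neg]
        apply hb
        rw [← abs_neg]; convert hs using 2; ring)
      (by simpa using h0) (-t) (by linarith)
      (by rw [← abs_neg]; convert ht using 2; ring)
    simpa using this

lemma tt_unif {F : Type*} [NormedAddCommGroup F] (G : ℝ → ℝ → F)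
    (hG : Continuous (fun x : ℝ × ℝ => G x.1 x.2)) (a b0 T η : ℝ) (hη : 0 < η) :
    ∃ d > 0, d ≤ 1 ∧ ∀ a', |a' - a| ≤ d → ∀ b, |b - b0| ≤ T → ‖G a' b - G a b‖ ≤ η := by
  have hc : IsCompact (Set.Icc (a-1) (a+1) ×ˢ Set.Icc (b0 - T) (b0 + T)) :=
    isCompact_Icc.prod isCompact_Icc
  have := hc.uniformContinuousOn_of_continuous hG.continuousOn
  rw [Metric.uniformContinuousOn_iff] at this
  obtain ⟨d, hd, h⟩ := this η hη
  refine ⟨min (d/2) 1, by positivity, min_le_right _ _, fun a' ha' b hb => ?_⟩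
  have h1 : |a' - a| ≤ d/2 := ha'.trans (min_le_left _ _)
  have h2 : |a' - a| ≤ 1 := ha'.trans (min_le_right _ _)
  rw [abs_le] at h2 hb
  have := h (a', b) ⟨⟨by linarith, by linarith⟩, ⟨by linarith, by linarith⟩⟩ (a, b)
    ⟨⟨by linarith, by linarith⟩, ⟨by linarith, by linarith⟩⟩ (by
      rw [Prod.dist_eq]
      simp only [dist_self]
      rw [max_lt_iff]
      refine ⟨?_, hd⟩
      rw [Real.dist_eq]; linarith)
  rw [dist_eq_norm] at this
  exact this.le

lemma tt_flat {E : Type*} [NormedAddCommGroup E] [NormedSpace ℝ E] [CompleteSpace E]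
    (A B Ab Ba : ℝ → ℝ → E →L[ℝ] E)
    (hA : Continuous (fun x : ℝ × ℝ => A x.1 x.2)) (hB : Continuous (fun x : ℝ × ℝ => B x.1 x.2))
    (hBac : Continuous (fun x : ℝ × ℝ => Ba x.1 x.2))
    (hBa : ∀ a b, HasDerivAt (fun a => B a b) (Ba a b) a)
    (hAb : ∀ a b, HasDerivAt (fun b => A a b) (Ab a b) b)
    (comm : ∀ a b v, Ab a b v + A a b (B a b v) = Ba a b v + B a b (A a b v))
    (a0 b0 : ℝ) (c : E) :
    ∃ y : ℝ → ℝ → E, y a0 b0 = c ∧ (∀ a b, HasDerivAt (fun a => y a b) (A a b (y a b)) a) ∧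
      (∀ a b, HasDerivAt (fun b => y a b) (B a b (y a b)) b) := by
  obtain ⟨φ, hφ0, hφ⟩ := tt_lin_ode (fun a => A a b0) (by fun_prop) a0 c
  have := fun a => tt_lin_ode (fun b => B a b) (by fun_prop) b0 (φ a)
  choose y hy0 hy using this
  refine ⟨y, by rw [hy0, hφ0], ?_, hy⟩
  intro a b
  set T := |b - b0| with hT
  have yc : Continuous (y a) := continuous_iff_continuousAt.mpr fun b => (hy a b).continuousAt
  have Ayc : Continuous (fun b => A a b (y a b)) :=
    Continuous.clm_apply (by fun_prop) yc
  have cpt : IsCompact (Set.Icc (b0 - T) (b0 + T)) := isCompact_Icc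
  have memI : ∀ b, |b - b0| ≤ T → b ∈ Set.Icc (b0 - T) (b0 + T) := by
    intro b hb; rw [abs_le] at hb; constructor <;> linarith [hb.1, hb.2]
  obtain ⟨C1, hC1⟩ := cpt.exists_bound_of_continuousOn yc.continuousOn
  obtain ⟨C2, hC2⟩ := cpt.exists_bound_of_continuousOn Ayc.continuousOn
  have hc : IsCompact (Set.Icc (a-1) (a+1) ×ˢ Set.Icc (b0 - T) (b0 + T)) :=
    isCompact_Icc.prod isCompact_Icc
  obtain ⟨K0, hK0⟩ := hc.exists_bound_of_continuousOn hB.continuousOn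
  set K := max K0 1
  set C := max (max C1 C2) 0 + 1
  have hC0 : 0 < C := by positivity
  have hK1 : 1 ≤ K := le_max_right _ _
  rw [hasDerivAt_iff_isLittleO, Asymptotics.isLittleO_iff]
  intro e he
  set M := Real.exp (K * T)
  have hM : 0 < M := Real.exp_pos _
  set η := e / (M * (1 + 2 * C)) with hη
  have hηp : 0 < η := by positivity
  obtain ⟨d1, hd1, hd1', H1⟩ := tt_unif B hB a b0 T η hηp
  obtain ⟨d2, hd2, hd2', H2⟩ := tt_unif Ba hBac a b0 T η hηp
  have H3 := (hasDerivAt_iff_isLittleO.mp (hφ a))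
  rw [Asymptotics.isLittleO_iff] at H3
  have H3 := H3 hηp
  have H4 : ∀ᶠ x in nhds a, |x - a| < min d1 d2 := by
    have : Metric.ball a (min d1 d2) ∈ nhds a := Metric.ball_mem_nhds _ (by positivity)
    filter_upwards [this] with x hx
    simpa [Real.dist_eq] using hx
  filter_upwards [H3, H4] with a' h3 h4
  have h41 : |a' - a| ≤ d1 := h4.le.trans (min_le_left _ _)
  have h42 : |a' - a| ≤ d2 := h4.le.trans (min_le_right _ _)
  set h := a' - a
  have hn : ‖h‖ = |h| := rfl
  -- B difference
  have HB : ∀ t, |t - b0| ≤ T → ‖B a' t - B a t - h • Ba a t‖ ≤ η * |h| := by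
    intro t ht
    have := Convex.norm_image_sub_le_of_norm_hasDerivWithin_le (𝕜 := ℝ)
      (f := fun x => B x t - x • Ba a t)
      (f' := fun x => Ba x t - (1:ℝ) • Ba a t) (s := Metric.closedBall a d2) (x := a) (y := a') (C := η)
      (fun x hx => ((hBa x t).sub ((hasDerivAt_id x).smul_const (Ba a t))).hasDerivWithinAt)
      (fun x hx => by
        rw [one_smul]
        exact H2 x (by simpa [Real.dist_eq] using hx) t ht)
      (convex_closedBall _ _) (by simp [hd2.le]) (by simpa [Real.dist_eq] using h42)
    rw [hn] at this
    have e2 : B a' t - B a t - h • Ba a t = B a' t - a' • Ba a t - (B a t - a • Ba a t) := by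
      rw [show h = a' - a from rfl, sub_smul]; abel
    rw [e2]; exact this
  have key := tt_gron (fun t => y a' t - y a t - h • A a t (y a t))
    (fun t => B a' t (y a' t) - B a t (y a t) - h • (Ab a t (y a t) + A a t (B a t (y a t))))
    b0 T K (η * |h| * (2 * C)) (η * |h|) hK1 (by positivity) (by positivity)
    (fun t => by
      have := ((hAb a t).clm_apply (hy a t))
      exact ((hy a' t).sub (hy a t)).sub (this.const_smul h))
    (by
      intro t ht
      have e1 : B a' t (y a' t) - B a t (y a t) - h • (Ab a t (y a t) + A a t (B a t (y a t)))
          = B a' t (y a' t - y a t - h • A a t (y a t))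
            + ((B a' t - B a t - h • Ba a t) (y a t) + h • ((B a' t - B a t) (A a t (y a t)))) := by
        rw [comm]
        simp only [map_sub, map_smul, sub_apply, smul_apply,
          smul_sub, smul_add]
        abel
      rw [e1]
      refine (norm_add_le _ _).trans ?_
      have k1 : ‖B a' t‖ ≤ K := by
        refine (hK0 (a', t) ⟨?_, memI t ht⟩).trans (le_max_left _ _)
        have := abs_le.mp (h41.trans hd1')
        constructor <;> linarith [this.1, this.2]
      have k2 : ‖y a t‖ ≤ C := by
        have := hC1 t (memI t ht)
        have h2 : C1 ≤ max (max C1 C2) 0 := le_max_of_le_left (le_max_left _ _)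
        simp only [C]; linarith
      have k3 : ‖A a t (y a t)‖ ≤ C := by
        have := hC2 t (memI t ht)
        have h2 : C2 ≤ max (max C1 C2) 0 := le_max_of_le_left (le_max_right _ _)
        simp only [C]; linarith
      apply add_le_add
      · exact ((B a' t).le_opNorm _).trans (by gcongr)
      · refine (norm_add_le _ _).trans ?_
        have q1 : ‖(B a' t - B a t - h • Ba a t) (y a t)‖ ≤ η * |h| * C :=
          (ContinuousLinearMap.le_opNorm _ _).trans (by gcongr; exact HB t ht)
        have q2 : ‖h • ((B a' t - B a t) (A a t (y a t)))‖ ≤ |h| * (η * C) := by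
          rw [norm_smul, hn]
          gcongr
          exact (ContinuousLinearMap.le_opNorm _ _).trans (by gcongr; exact H1 a' h41 t ht)
        linarith)
    (by
      simp only [hy0]
      exact h3) b le_rfl
  refine key.trans (le_of_eq ?_)
  rw [hn, hη]
  change _ * M = _
  field_simp

end odepart

section secpart

lemma tt_unique_ode {E : Type*} [NormedAddCommGroup E] [NormedSpace ℝ E]
    (B : ℝ → E →L[ℝ] E) (hB : Continuous B) (t0 : ℝ) (y z : ℝ → E)
    (hy : ∀ t, HasDerivAt y (B t (y t)) t) (hz : ∀ t, HasDerivAt z (B t (z t)) t)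
    (h0 : y t0 = z t0) (t : ℝ) : y t = z t := by
  obtain ⟨K, hK⟩ := (isCompact_Icc (a := t0 - |t - t0|) (b := t0 + |t - t0|)).exists_bound_of_continuousOn
      hB.continuousOn
  have := tt_gron (fun t => y t - z t) (fun t => B t (y t) - B t (z t)) t0 |t - t0| (max K 1) 0 0
    (le_max_right _ _) le_rfl le_rfl (fun t => (hy t).sub (hz t))
    (fun x hx => by
      rw [← map_sub, add_zero]
      refine ((B x).le_opNorm _).trans ?_
      gcongr
      refine (hK x ?_).trans (le_max_left _ _)
      rw [abs_le] at hx
      constructor <;> linarith [hx.1, hx.2]) (by simp [h0]) t le_rfl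
  simp only [add_zero, zero_mul, norm_le_zero_iff] at this
  exact sub_eq_zero.mp this

lemma tt_unique_flat {E : Type*} [NormedAddCommGroup E] [NormedSpace ℝ E]
    (A B : ℝ → ℝ → E →L[ℝ] E)
    (hA : Continuous (fun x : ℝ × ℝ => A x.1 x.2)) (hB : Continuous (fun x : ℝ × ℝ => B x.1 x.2))
    (a0 b0 : ℝ) (y z : ℝ → ℝ → E)
    (hya : ∀ a b, HasDerivAt (fun a => y a b) (A a b (y a b)) a)
    (hyb : ∀ a b, HasDerivAt (fun b => y a b) (B a b (y a b)) b)
    (hza : ∀ a b, HasDerivAt (fun a => z a b) (A a b (z a b)) a)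
    (hzb : ∀ a b, HasDerivAt (fun b => z a b) (B a b (z a b)) b)
    (h0 : y a0 b0 = z a0 b0) (a b : ℝ) : y a b = z a b := by
  have h1 : y a b0 = z a b0 :=
    tt_unique_ode (fun a => A a b0) (by fun_prop) a0 (fun a => y a b0) (fun a => z a b0)
      (fun a => hya a b0) (fun a => hza a b0) h0 a
  exact tt_unique_ode (fun b => B a b) (by fun_prop) b0 (fun b => y a b) (fun b => z a b)
      (fun b => hyb a b) (fun b => hzb a b) h1 b

lemma tt_pos_section (A B Ab Ba : ℝ → ℝ → (Fin 4 → ℝ) →L[ℝ] (Fin 4 → ℝ))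
    (hA : Continuous (fun x : ℝ × ℝ => A x.1 x.2)) (hB : Continuous (fun x : ℝ × ℝ => B x.1 x.2))
    (hBac : Continuous (fun x : ℝ × ℝ => Ba x.1 x.2))
    (hBa : ∀ a b, HasDerivAt (fun a => B a b) (Ba a b) a)
    (hAb : ∀ a b, HasDerivAt (fun b => A a b) (Ab a b) b)
    (comm : ∀ a b v, Ab a b v + A a b (B a b v) = Ba a b v + B a b (A a b v))
    (pos : ∀ (y : ℝ → ℝ → (Fin 4 → ℝ)) (n : ℝ),
      (∀ a b, HasDerivAt (fun a => y a b) (A a b (y a b)) a) →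
      (∀ a b, HasDerivAt (fun b => y a b) (B a b (y a b)) b) → (∀ i, y n n i = 1) →
      ∀ a b, a ≤ n → b ≤ n → ∀ i, 0 < y a b i) :
    ∃ y : ℝ → ℝ → (Fin 4 → ℝ),
      (∀ a b, HasDerivAt (fun a => y a b) (A a b (y a b)) a) ∧
      (∀ a b, HasDerivAt (fun b => y a b) (B a b (y a b)) b) ∧
      (∀ a b i, 0 ≤ y a b i) ∧ ∑ i, y 0 0 i = 1 := by
  have F := tt_flat A B Ab Ba hA hB hBac hBa hAb comm
  have F1 := fun n : ℕ => F n n (fun _ => 1)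
  choose z hz0 hza hzb using F1
  have F2 := fun j : Fin 4 => F 0 0 (Pi.single j 1)
  choose Y hY0 hYa hYb using F2
  have zp : ∀ n : ℕ, ∀ a b : ℝ, a ≤ n → b ≤ n → ∀ i, 0 < z n a b i := fun n =>
    pos (z n) n (hza n) (hzb n) (fun i => by rw [hz0])
  let S : ℕ → ℝ := fun n => ∑ i, z n 0 0 i
  have hS : ∀ n, 0 < S n := fun n => Finset.sum_pos (fun i _ => zp n 0 0 (by positivity) (by positivity) i)
    Finset.univ_nonempty
  let c : ℕ → Fin 4 → ℝ := fun n i => z n 0 0 i / S n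
  have hc : ∀ n, c n ∈ stdSimplex ℝ (Fin 4) := by
    intro n
    constructor
    · intro i; exact div_nonneg (zp n 0 0 (by positivity) (by positivity) i).le (hS n).le
    · simp only [c]; rw [← Finset.sum_div]; exact div_self (hS n).ne'
  obtain ⟨c0, hc0, φ, hφ, hlim⟩ := (isCompact_stdSimplex ℝ (Fin 4)).tendsto_subseq hc
  have comb : ∀ d : Fin 4 → ℝ,
      (∀ a b, HasDerivAt (fun a => ∑ j, d j • Y j a b) (A a b (∑ j, d j • Y j a b)) a) ∧
      (∀ a b, HasDerivAt (fun b => ∑ j, d j • Y j a b) (B a b (∑ j, d j • Y j a b)) b) := by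
    intro d
    constructor
    · intro a b
      rw [map_sum]
      apply HasDerivAt.fun_sum
      intro j _
      rw [map_smul]
      exact (hYa j a b).const_smul (d j)
    · intro a b
      rw [map_sum]
      apply HasDerivAt.fun_sum
      intro j _
      rw [map_smul]
      exact (hYb j a b).const_smul (d j)
  have comb0 : ∀ d : Fin 4 → ℝ, ∑ j, d j • Y j 0 0 = d := by
    intro d
    simp only [hY0]
    ext i
    simp [Finset.sum_apply, Pi.single_apply]
  have eqn : ∀ n a b, ∑ j, c n j • Y j a b = (S n)⁻¹ • z n a b := by
    intro n a b
    apply tt_unique_flat A B hA hB 0 0 (fun a b => ∑ j, c n j • Y j a b)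
      (fun a b => (S n)⁻¹ • z n a b) (comb _).1 (comb _).2
    · intro a b
      rw [map_smul]; exact (hza n a b).const_smul (S n)⁻¹
    · intro a b
      rw [map_smul]; exact (hzb n a b).const_smul (S n)⁻¹
    · beta_reduce
      rw [comb0]
      ext i
      simp [c, div_eq_inv_mul]
  refine ⟨fun a b => ∑ j, c0 j • Y j a b, (comb c0).1, (comb c0).2, ?_, ?_⟩
  · intro a b i
    have ht : Tendsto (fun n => (∑ j, c (φ n) j • Y j a b) i) atTop (nhds ((∑ j, c0 j • Y j a b) i)) := by
      simp only [Finset.sum_apply, Pi.smul_apply, smul_eq_mul]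
      apply tendsto_finsetSum
      intro j _
      apply Tendsto.mul_const
      exact (tendsto_pi_nhds.mp hlim) j
    apply ge_of_tendsto ht
    obtain ⟨N, hN⟩ := exists_nat_ge (max a b)
    filter_upwards [eventually_ge_atTop N] with n hn
    rw [eqn]
    have : (N:ℝ) ≤ (φ n : ℝ) := by exact_mod_cast hn.trans (hφ.id_le n)
    have := zp (φ n) a b (((le_max_left _ _).trans hN).trans this) (((le_max_right _ _).trans hN).trans this) i
    have h2 := hS (φ n)
    simp only [Pi.smul_apply, smul_eq_mul]
    positivity
  · beta_reduce
    rw [comb0]; exact hc0.2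

/-- cyclic nonneg chain, backward positivity -/
lemma tt_chain_pos (χ c : Fin 4 → ℝ → ℝ) (σ : Fin 4 → Fin 4) (t0 : ℝ)
    (hc : ∀ i t, 0 ≤ c i t) (hd : ∀ i t, HasDerivAt (χ i) (-(c i t * χ (σ i) t)) t)
    (h0 : ∀ i, 0 < χ i t0) (t : ℝ) (ht : t ≤ t0) : ∀ i, 0 < χ i t := by
  by_contra hcon
  push Not at hcon
  let s : Set ℝ := {x | x ≤ t0 ∧ ∃ i, χ i x ≤ 0}
  have cont : ∀ i, Continuous (χ i) := fun i =>
    continuous_iff_continuousAt.mpr fun t => (hd i t).continuousAt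
  have hs : IsClosed s := by
    have : s = Set.Iic t0 ∩ ⋃ i, {x | χ i x ≤ 0} := by
      ext x; simp [s]
    rw [this]
    apply isClosed_Iic.inter
    apply isClosed_iUnion_of_finite
    intro i
    exact isClosed_le (cont i) continuous_const
  have hne : s.Nonempty := ⟨t, ht, hcon⟩
  have hbdd : BddAbove s := ⟨t0, fun x hx => hx.1⟩
  have hm := hs.csSup_mem hne hbdd
  set m := sSup s
  obtain ⟨hm1, i, hi⟩ := hm
  have anti : AntitoneOn (χ i) (Set.Icc m t0) := by
    apply antitoneOn_of_deriv_nonpos (convex_Icc _ _) (cont i).continuousOn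
    · intro x _; exact (hd i x).differentiableAt.differentiableWithinAt
    · intro x hx
      rw [interior_Icc] at hx
      rw [(hd i x).deriv]
      have : 0 < χ (σ i) x := by
        by_contra hneg
        push Not at hneg
        have : x ∈ s := ⟨hx.2.le, _, hneg⟩
        have := le_csSup hbdd this
        linarith [hx.1]
      have := mul_nonneg (hc i x) this.le
      linarith
  have := anti ⟨le_rfl, hm1⟩ ⟨hm1, le_rfl⟩ hm1
  linarith [h0 i]

/-- profile functions -/
structure TTProf (e0 e4 L N : ℝ → ℝ) : Prop where
  he0 : ∀ s, HasDerivAt e0 (2 * L s) s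
  he4 : ∀ s, HasDerivAt e4 (2 * N s) s
  hL : ∀ s, HasDerivAt L (2 * (exp (8 * s + 2 * e0 s) - exp (e4 s - 2 * e0 s))) s
  hN : ∀ s, HasDerivAt N (2 * (exp (8 * s + 2 * e0 s) - exp (2 * e0 s - 2 * e4 s))) s
  lim0 : Tendsto (fun s => e0 s / s) atBot (nhds 0)
  lim4 : Tendsto (fun s => e4 s / s) atBot (nhds 0)

/-- flat sections -/
structure TTSec (e0 e4 L N : ℝ → ℝ) (y : Fin 4 → ℝ → ℝ → ℝ) : Prop where
  a0 : ∀ a b, HasDerivAt (fun a => y 0 a b) (L ((a+b)/2) * y 0 a b - y 1 a b) a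
  a1 : ∀ a b, HasDerivAt (fun a => y 1 a b)
    ((N ((a+b)/2) - L ((a+b)/2)) * y 1 a b - y 2 a b) a
  a2 : ∀ a b, HasDerivAt (fun a => y 2 a b)
    (-(N ((a+b)/2) - L ((a+b)/2)) * y 2 a b - y 3 a b) a
  a3 : ∀ a b, HasDerivAt (fun a => y 3 a b) (-L ((a+b)/2) * y 3 a b - exp (4*a) * y 0 a b) a
  b0 : ∀ a b, HasDerivAt (fun b => y 0 a b) (-(exp (4*b + 2 * e0 ((a+b)/2)) * y 3 a b)) b
  b1 : ∀ a b, HasDerivAt (fun b => y 1 a b) (-(exp (e4 ((a+b)/2) - 2 * e0 ((a+b)/2)) * y 0 a b)) b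
  b2 : ∀ a b, HasDerivAt (fun b => y 2 a b) (-(exp (2 * e0 ((a+b)/2) - 2 * e4 ((a+b)/2)) * y 1 a b)) b
  b3 : ∀ a b, HasDerivAt (fun b => y 3 a b) (-(exp (e4 ((a+b)/2) - 2 * e0 ((a+b)/2)) * y 2 a b)) b

lemma hda_half {f : ℝ → ℝ} {f' : ℝ} (b a : ℝ) (h : HasDerivAt f f' ((a+b)/2)) :
    HasDerivAt (fun a => f ((a+b)/2)) (f'/2) a := by
  have h2 : HasDerivAt (fun a : ℝ => (a+b)/2) (1/2) a := by
    simpa using ((hasDerivAt_id a).add_const b).div_const 2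
  exact (h.comp a h2).congr_deriv (by ring)

lemma hda_half' {f : ℝ → ℝ} {f' : ℝ} (a b : ℝ) (h : HasDerivAt f f' ((a+b)/2)) :
    HasDerivAt (fun b => f ((a+b)/2)) (f'/2) b := by
  have h2 : HasDerivAt (fun b : ℝ => (a+b)/2) (1/2) b := by
    simpa using ((hasDerivAt_id b).const_add a).div_const 2
  exact (h.comp b h2).congr_deriv (by ring)

/-- matrix units -/
noncomputable def ttE (i j : Fin 4) : (Fin 4 → ℝ) →L[ℝ] (Fin 4 → ℝ) :=
  (ContinuousLinearMap.single ℝ (fun _ : Fin 4 => ℝ) i).comp (ContinuousLinearMap.proj j)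

lemma ttE_apply (i j : Fin 4) (v : Fin 4 → ℝ) (k : Fin 4) :
    ttE i j v k = if k = i then v j else 0 := by
  simp [ttE, Pi.single_apply]

theorem tt_exists_pos {e0 e4 L N : ℝ → ℝ} (h : TTProf e0 e4 L N) :
    ∃ y : Fin 4 → ℝ → ℝ → ℝ, TTSec e0 e4 L N y ∧ (∀ i a b, 0 ≤ y i a b) ∧ ∑ i, y i 0 0 = 1 := by
  have ce0 : Continuous e0 := continuous_iff_continuousAt.mpr fun t => (h.he0 t).continuousAt
  have ce4 : Continuous e4 := continuous_iff_continuousAt.mpr fun t => (h.he4 t).continuousAt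
  have cL : Continuous L := continuous_iff_continuousAt.mpr fun t => (h.hL t).continuousAt
  have cN : Continuous N := continuous_iff_continuousAt.mpr fun t => (h.hN t).continuousAt
  let A : ℝ → ℝ → (Fin 4 → ℝ) →L[ℝ] (Fin 4 → ℝ) := fun a b =>
    L ((a+b)/2) • ttE 0 0 - ttE 0 1 + (N ((a+b)/2) - L ((a+b)/2)) • ttE 1 1 - ttE 1 2
    - (N ((a+b)/2) - L ((a+b)/2)) • ttE 2 2 - ttE 2 3 - L ((a+b)/2) • ttE 3 3 - exp (4*a) • ttE 3 0
  let B : ℝ → ℝ → (Fin 4 → ℝ) →L[ℝ] (Fin 4 → ℝ) := fun a b =>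
    -(exp (4*b + 2 * e0 ((a+b)/2)) • ttE 0 3 + exp (e4 ((a+b)/2) - 2 * e0 ((a+b)/2)) • ttE 1 0
      + exp (2 * e0 ((a+b)/2) - 2 * e4 ((a+b)/2)) • ttE 2 1
      + exp (e4 ((a+b)/2) - 2 * e0 ((a+b)/2)) • ttE 3 2)
  let L' : ℝ → ℝ := fun s => exp (8 * s + 2 * e0 s) - exp (e4 s - 2 * e0 s)
  let N' : ℝ → ℝ := fun s => exp (8 * s + 2 * e0 s) - exp (2 * e0 s - 2 * e4 s)
  let Ab : ℝ → ℝ → (Fin 4 → ℝ) →L[ℝ] (Fin 4 → ℝ) := fun a b =>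
    L' ((a+b)/2) • ttE 0 0 + (N' ((a+b)/2) - L' ((a+b)/2)) • ttE 1 1
    - (N' ((a+b)/2) - L' ((a+b)/2)) • ttE 2 2 - L' ((a+b)/2) • ttE 3 3
  let Ba : ℝ → ℝ → (Fin 4 → ℝ) →L[ℝ] (Fin 4 → ℝ) := fun a b =>
    -((exp (4*b + 2 * e0 ((a+b)/2)) * (2 * L ((a+b)/2))) • ttE 0 3
      + (exp (e4 ((a+b)/2) - 2 * e0 ((a+b)/2)) * (N ((a+b)/2) - 2 * L ((a+b)/2))) • ttE 1 0
      + (exp (2 * e0 ((a+b)/2) - 2 * e4 ((a+b)/2)) * (2 * L ((a+b)/2) - 2 * N ((a+b)/2))) • ttE 2 1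
      + (exp (e4 ((a+b)/2) - 2 * e0 ((a+b)/2)) * (N ((a+b)/2) - 2 * L ((a+b)/2))) • ttE 3 2)
  have dLb : ∀ a b, HasDerivAt (fun b => L ((a+b)/2)) (L' ((a+b)/2)) b := by
    intro a b
    convert hda_half' a b (h.hL ((a+b)/2)) using 1
    simp only [L']; ring
  have dNb : ∀ a b, HasDerivAt (fun b => N ((a+b)/2)) (N' ((a+b)/2)) b := by
    intro a b
    convert hda_half' a b (h.hN ((a+b)/2)) using 1
    simp only [N']; ring
  have de0a : ∀ a b, HasDerivAt (fun a => e0 ((a+b)/2)) (L ((a+b)/2)) a := by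
    intro a b
    convert hda_half b a (h.he0 ((a+b)/2)) using 1
    ring
  have de4a : ∀ a b, HasDerivAt (fun a => e4 ((a+b)/2)) (N ((a+b)/2)) a := by
    intro a b
    convert hda_half b a (h.he4 ((a+b)/2)) using 1
    ring
  have appA : ∀ a b v, A a b v = ![L ((a+b)/2) * v 0 - v 1,
      (N ((a+b)/2) - L ((a+b)/2)) * v 1 - v 2, -(N ((a+b)/2) - L ((a+b)/2)) * v 2 - v 3,
      -L ((a+b)/2) * v 3 - exp (4*a) * v 0] := by
    intro a b v
    ext i
    fin_cases i <;> simp [A, ttE_apply] <;> ring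
  have appB : ∀ a b v, B a b v = ![-(exp (4*b + 2 * e0 ((a+b)/2)) * v 3),
      -(exp (e4 ((a+b)/2) - 2 * e0 ((a+b)/2)) * v 0),
      -(exp (2 * e0 ((a+b)/2) - 2 * e4 ((a+b)/2)) * v 1),
      -(exp (e4 ((a+b)/2) - 2 * e0 ((a+b)/2)) * v 2)] := by
    intro a b v
    ext i
    fin_cases i <;> simp [B, ttE_apply]
  obtain ⟨y, ha, hb, hp, hs⟩ := tt_pos_section A B Ab Ba (by fun_prop) (by fun_prop) (by fun_prop)
    (by
      intro a b
      have q1 := ((de0a a b).const_mul 2).const_add (4*b) |>.exp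
      have q2 := ((de4a a b).sub ((de0a a b).const_mul 2)).exp
      have q3 := (((de0a a b).const_mul 2).sub ((de4a a b).const_mul 2)).exp
      exact ((((q1.smul_const (ttE 0 3)).add (q2.smul_const (ttE 1 0))).add
        (q3.smul_const (ttE 2 1))).add (q2.smul_const (ttE 3 2))).neg)
    (by
      intro a b
      have q1 := dLb a b
      have q2 := (dNb a b).sub (dLb a b)
      have := (((((((q1.smul_const (ttE 0 0)).sub_const (ttE 0 1)).add (q2.smul_const (ttE 1 1))).sub_const
        (ttE 1 2)).sub (q2.smul_const (ttE 2 2))).sub_const (ttE 2 3)).sub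
        (q1.smul_const (ttE 3 3))).sub_const (exp (4*a) • ttE 3 0)
      exact this)
    (by
      intro a b v
      have ex : exp (8 * ((a+b)/2) + 2 * e0 ((a+b)/2)) = exp (4*a) * exp (4*b + 2 * e0 ((a+b)/2)) := by
        rw [← exp_add]; congr 1; ring
      rw [appA, appB, appA, appB]
      ext i
      fin_cases i <;> simp [Ab, Ba, ttE_apply, L', N', ex] <;> ring)
    (by
      intro y n ha hb h1
      have ha' := fun a b => hasDerivAt_pi.mp (ha a b)
      have hb' := fun a b => hasDerivAt_pi.mp (hb a b)
      simp only [appA] at ha'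
      simp only [appB] at hb'
      have st1 : ∀ a, a ≤ n → ∀ i, 0 < y a n i := by
        intro a han
        have q0 : ∀ t, HasDerivAt (fun a => exp (-e0 ((a+n)/2)) * y a n 0)
            (-(exp ((e4 ((t+n)/2) - e0 ((t+n)/2)) - e0 ((t+n)/2)) *
              (exp (-(e4 ((t+n)/2) - e0 ((t+n)/2))) * y t n 1))) t := by
          intro t
          refine (((de0a t n).fun_neg.exp).fun_mul (ha' t n 0)).congr_deriv ?_
          rw [← mul_assoc (exp _) (exp _) (y t n 1), ← exp_add]
          simp
          ring_nf
        have q1 : ∀ t, HasDerivAt (fun a => exp (-(e4 ((a+n)/2) - e0 ((a+n)/2))) * y a n 1)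
            (-(exp (-2 * (e4 ((t+n)/2) - e0 ((t+n)/2))) *
              (exp ((e4 ((t+n)/2) - e0 ((t+n)/2))) * y t n 2))) t := by
          intro t
          refine ((((de4a t n).fun_sub (de0a t n)).fun_neg.exp).fun_mul (ha' t n 1)).congr_deriv ?_
          rw [← mul_assoc (exp _) (exp _) (y t n 2), ← exp_add]
          simp
          ring_nf
        have q2 : ∀ t, HasDerivAt (fun a => exp (e4 ((a+n)/2) - e0 ((a+n)/2)) * y a n 2)
            (-(exp ((e4 ((t+n)/2) - e0 ((t+n)/2)) - e0 ((t+n)/2)) *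
              (exp (e0 ((t+n)/2)) * y t n 3))) t := by
          intro t
          refine ((((de4a t n).fun_sub (de0a t n)).exp).fun_mul (ha' t n 2)).congr_deriv ?_
          rw [← mul_assoc (exp _) (exp _) (y t n 3), ← exp_add]
          simp
          ring_nf
        have q3 : ∀ t, HasDerivAt (fun a => exp (e0 ((a+n)/2)) * y a n 3)
            (-((exp (4*t) * exp (2 * e0 ((t+n)/2))) *
              (exp (-e0 ((t+n)/2)) * y t n 0))) t := by
          intro t
          refine (((de0a t n).exp).fun_mul (ha' t n 3)).congr_deriv ?_
          have e1 : exp (e0 ((t+n)/2)) = exp (2 * e0 ((t+n)/2)) * exp (-e0 ((t+n)/2)) := by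
            rw [← exp_add]; congr 1; ring
          simp
          rw [e1]
          ring_nf
        have hpos := tt_chain_pos (![fun a => exp (-e0 ((a+n)/2)) * y a n 0,
            fun a => exp (-(e4 ((a+n)/2) - e0 ((a+n)/2))) * y a n 1,
            fun a => exp (e4 ((a+n)/2) - e0 ((a+n)/2)) * y a n 2,
            fun a => exp (e0 ((a+n)/2)) * y a n 3])
          (![fun t => exp ((e4 ((t+n)/2) - e0 ((t+n)/2)) - e0 ((t+n)/2)),
             fun t => exp (-2 * (e4 ((t+n)/2) - e0 ((t+n)/2))),
             fun t => exp ((e4 ((t+n)/2) - e0 ((t+n)/2)) - e0 ((t+n)/2)),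
             fun t => exp (4*t) * exp (2 * e0 ((t+n)/2))])
          (fun i => i + 1) n
          (by intro i t; fin_cases i <;> simp <;> positivity)
          (by
            intro i t
            fin_cases i
            · exact q0 t
            · exact q1 t
            · exact q2 t
            · exact q3 t)
          (by intro i; fin_cases i <;> simp [h1] <;> positivity) a han
        intro i
        fin_cases i
        · exact pos_of_mul_pos_right (hpos 0) (exp_pos _).le
        · exact pos_of_mul_pos_right (hpos 1) (exp_pos _).le
        · exact pos_of_mul_pos_right (hpos 2) (exp_pos _).le
        · exact pos_of_mul_pos_right (hpos 3) (exp_pos _).le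
      intro a b han hbn
      exact tt_chain_pos (fun i b => y a b i)
          (![fun b => exp (4*b + 2 * e0 ((a+b)/2)),
             fun b => exp (e4 ((a+b)/2) - 2 * e0 ((a+b)/2)),
             fun b => exp (2 * e0 ((a+b)/2) - 2 * e4 ((a+b)/2)),
             fun b => exp (e4 ((a+b)/2) - 2 * e0 ((a+b)/2))])
          (fun i => i - 1) n
          (by intro i t; fin_cases i <;> simp <;> positivity)
          (by
            intro i t
            fin_cases i
            · exact hb' a t 0
            · exact hb' a t 1
            · exact hb' a t 2
            · exact hb' a t 3)
          (st1 a han) b hbn)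
  have ha' := fun a b => hasDerivAt_pi.mp (ha a b)
  have hb' := fun a b => hasDerivAt_pi.mp (hb a b)
  simp only [appA] at ha'
  simp only [appB] at hb'
  exact ⟨fun i a b => y a b i, ⟨fun a b => ha' a b 0, fun a b => ha' a b 1, fun a b => ha' a b 2,
    fun a b => ha' a b 3, fun a b => hb' a b 0, fun a b => hb' a b 1, fun a b => hb' a b 2,
    fun a b => hb' a b 3⟩, fun i a b => hp a b i, hs⟩

end secpart

section p3

noncomputable def ttSym (e0 e4 : ℝ → ℝ) (y : Fin 4 → ℝ → ℝ → ℝ) : Fin 4 → ℝ → ℝ → ℝ :=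
  ![fun a b => exp (e0 ((a+b)/2)) * y 3 b a, fun a b => exp (e4 ((a+b)/2) - e0 ((a+b)/2)) * y 2 b a,
    fun a b => exp (e0 ((a+b)/2) - e4 ((a+b)/2)) * y 1 b a, fun a b => exp (-e0 ((a+b)/2)) * y 0 b a]

lemma ttSym_sec {e0 e4 L N : ℝ → ℝ} (h : TTProf e0 e4 L N) {y : Fin 4 → ℝ → ℝ → ℝ}
    (hy : TTSec e0 e4 L N y) : TTSec e0 e4 L N (ttSym e0 e4 y) := by
  have de0a : ∀ a b, HasDerivAt (fun a => e0 ((a+b)/2)) (L ((a+b)/2)) a := fun a b =>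
    (hda_half b a (h.he0 ((a+b)/2))).congr_deriv (by ring)
  have de4a : ∀ a b, HasDerivAt (fun a => e4 ((a+b)/2)) (N ((a+b)/2)) a := fun a b =>
    (hda_half b a (h.he4 ((a+b)/2))).congr_deriv (by ring)
  have de0b : ∀ a b, HasDerivAt (fun b => e0 ((a+b)/2)) (L ((a+b)/2)) b := fun a b =>
    (hda_half' a b (h.he0 ((a+b)/2))).congr_deriv (by ring)
  have de4b : ∀ a b, HasDerivAt (fun b => e4 ((a+b)/2)) (N ((a+b)/2)) b := fun a b =>
    (hda_half' a b (h.he4 ((a+b)/2))).congr_deriv (by ring)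
  constructor
  · intro a b
    refine ((de0a a b).exp.fun_mul (hy.b3 b a)).congr_deriv ?_
    simp only [ttSym, add_comm b a]
    simp
    rw [show e4 ((a+b)/2) - 2 * e0 ((a+b)/2) = (e4 ((a+b)/2) - e0 ((a+b)/2)) - e0 ((a+b)/2) by ring,
      exp_sub (e4 ((a+b)/2) - e0 ((a+b)/2)) (e0 ((a+b)/2))]
    field_simp; ring
  · intro a b
    refine (((de4a a b).fun_sub (de0a a b)).exp.fun_mul (hy.b2 b a)).congr_deriv ?_
    simp only [ttSym, add_comm b a]
    simp
    rw [show 2 * e0 ((a+b)/2) - 2 * e4 ((a+b)/2) = (e0 ((a+b)/2) - e4 ((a+b)/2)) - (e4 ((a+b)/2) - e0 ((a+b)/2)) by ring,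
      exp_sub _ (e4 ((a+b)/2) - e0 ((a+b)/2))]
    field_simp; ring
  · intro a b
    refine (((de0a a b).fun_sub (de4a a b)).exp.fun_mul (hy.b1 b a)).congr_deriv ?_
    simp only [ttSym, add_comm b a]
    simp
    rw [show e4 ((a+b)/2) - 2 * e0 ((a+b)/2) = (- e0 ((a+b)/2)) - (e0 ((a+b)/2) - e4 ((a+b)/2)) by ring,
      exp_sub _ (e0 ((a+b)/2) - e4 ((a+b)/2))]
    field_simp; ring
  · intro a b
    refine (((de0a a b).fun_neg).exp.fun_mul (hy.b0 b a)).congr_deriv ?_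
    simp only [ttSym, add_comm b a]
    simp
    rw [show 4 * a + 2 * e0 ((a+b)/2) = (4 * a + e0 ((a+b)/2)) - (-e0 ((a+b)/2)) by ring,
      exp_sub, exp_add]
    field_simp; ring
  · intro a b
    refine ((de0b a b).exp.fun_mul (hy.a3 b a)).congr_deriv ?_
    simp only [ttSym, add_comm b a]
    simp
    rw [show 4 * b + 2 * e0 ((a+b)/2) = (4 * b + e0 ((a+b)/2)) - (-e0 ((a+b)/2)) by ring,
      exp_sub, exp_add]
    field_simp; ring
  · intro a b
    refine (((de4b a b).fun_sub (de0b a b)).exp.fun_mul (hy.a2 b a)).congr_deriv ?_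
    simp only [ttSym, add_comm b a]
    simp
    rw [show e4 ((a+b)/2) - 2 * e0 ((a+b)/2) = (e4 ((a+b)/2) - e0 ((a+b)/2)) - e0 ((a+b)/2) by ring,
      exp_sub (e4 ((a+b)/2) - e0 ((a+b)/2)) (e0 ((a+b)/2))]
    field_simp; ring
  · intro a b
    refine (((de0b a b).fun_sub (de4b a b)).exp.fun_mul (hy.a1 b a)).congr_deriv ?_
    simp only [ttSym, add_comm b a]
    simp
    rw [show 2 * e0 ((a+b)/2) - 2 * e4 ((a+b)/2) = (e0 ((a+b)/2) - e4 ((a+b)/2)) - (e4 ((a+b)/2) - e0 ((a+b)/2)) by ring,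
      exp_sub _ (e4 ((a+b)/2) - e0 ((a+b)/2))]
    field_simp; ring
  · intro a b
    refine (((de0b a b).fun_neg).exp.fun_mul (hy.a0 b a)).congr_deriv ?_
    simp only [ttSym, add_comm b a]
    simp
    rw [show e4 ((a+b)/2) - 2 * e0 ((a+b)/2) = (- e0 ((a+b)/2)) - (e0 ((a+b)/2) - e4 ((a+b)/2)) by ring,
      exp_sub _ (e0 ((a+b)/2) - e4 ((a+b)/2))]
    field_simp; ring

lemma ttSec_add {e0 e4 L N : ℝ → ℝ} {y z : Fin 4 → ℝ → ℝ → ℝ}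
    (hy : TTSec e0 e4 L N y) (hz : TTSec e0 e4 L N z) :
    TTSec e0 e4 L N (fun i a b => y i a b + z i a b) := by
  constructor <;> intro a b
  · exact ((hy.a0 a b).fun_add (hz.a0 a b)).congr_deriv (by ring)
  · exact ((hy.a1 a b).fun_add (hz.a1 a b)).congr_deriv (by ring)
  · exact ((hy.a2 a b).fun_add (hz.a2 a b)).congr_deriv (by ring)
  · exact ((hy.a3 a b).fun_add (hz.a3 a b)).congr_deriv (by ring)
  · exact ((hy.b0 a b).fun_add (hz.b0 a b)).congr_deriv (by ring)
  · exact ((hy.b1 a b).fun_add (hz.b1 a b)).congr_deriv (by ring)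
  · exact ((hy.b2 a b).fun_add (hz.b2 a b)).congr_deriv (by ring)
  · exact ((hy.b3 a b).fun_add (hz.b3 a b)).congr_deriv (by ring)

theorem tt_exists_sym {e0 e4 L N : ℝ → ℝ} (h : TTProf e0 e4 L N) :
    ∃ y : Fin 4 → ℝ → ℝ → ℝ, TTSec e0 e4 L N y ∧ (∀ i a b, 0 ≤ y i a b) ∧ 0 < ∑ i, y i 0 0 ∧
      ∀ a b, y 2 a b = exp (e0 ((a+b)/2) - e4 ((a+b)/2)) * y 1 b a := by
  obtain ⟨y, hy, hp, hs⟩ := tt_exists_pos h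
  have hq : ∀ i a b, 0 ≤ ttSym e0 e4 y i a b := by
    intro i a b
    fin_cases i <;> simp [ttSym] <;> exact mul_nonneg (exp_pos _).le (hp _ _ _)
  refine ⟨_, ttSec_add hy (ttSym_sec h hy), fun i a b => add_nonneg (hp i a b) (hq i a b), ?_, ?_⟩
  · rw [Finset.sum_add_distrib, hs]
    have := Finset.sum_nonneg (fun i (_ : i ∈ Finset.univ) => hq i 0 0)
    linarith
  · intro a b
    simp [ttSym, add_comm b a]
    rw [mul_add, ← mul_assoc, ← exp_add]
    simp
    ring

/-- limit of the log-derivative -/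
lemma tt_lim {e L U τ : ℝ → ℝ} {s0 : ℝ} (he : ∀ s, HasDerivAt e (2 * L s) s)
    (hL : ∀ s, HasDerivAt L (2 * (τ s - U s)) s) (hU : ∀ s, 0 ≤ U s)
    (hτ : ∀ s ≤ s0, τ s ≤ exp (7 * s)) (hlim : Tendsto (fun s => e s / s) atBot (nhds 0)) :
    Tendsto L atBot (nhds 0) := by
  let G : ℝ → ℝ := fun s => L s - 2/7 * exp (7 * s)
  have hG : ∀ s, HasDerivAt G (2 * (τ s - U s) - 2 * exp (7 * s)) s := by
    intro s
    have := (((hasDerivAt_id s).const_mul 7).exp).const_mul (2/7)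
    exact ((hL s).fun_sub this).congr_deriv (by simp; ring)
  have hE : Tendsto (fun s : ℝ => exp (7 * s)) atBot (nhds 0) :=
    tendsto_exp_atBot.comp (tendsto_id.const_mul_atBot (by norm_num))
  have anti : AntitoneOn G (Set.Iic s0) := by
    apply antitoneOn_of_deriv_nonpos (convex_Iic _)
    · exact fun x _ => (hG x).continuousAt.continuousWithinAt
    · exact fun x _ => (hG x).differentiableAt.differentiableWithinAt
    · intro x hx
      rw [interior_Iic] at hx
      rw [(hG x).deriv]
      have := hτ x hx.le
      have := hU x
      linarith
  -- slope helper
  have slope : ∀ t s, t < s → ∃ ξ ∈ Set.Ioo t s, e s - e t = 2 * L ξ * (s - t) := by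
    intro t s hts
    obtain ⟨ξ, hξ, h⟩ := exists_hasDerivAt_eq_slope e (fun s => 2 * L s) hts
      (fun x _ => (he x).continuousAt.continuousWithinAt) (fun x _ => he x)
    refine ⟨ξ, hξ, ?_⟩
    rw [h]; field_simp [sub_ne_zero.mpr hts.ne']
  have slim : ∀ s, Tendsto (fun t => (e s - e t) / (s - t)) atBot (nhds 0) := by
    intro s
    have h1 : Tendsto (fun t : ℝ => s / t) atBot (nhds 0) := tendsto_const_nhds.div_atBot tendsto_id
    have h2 : Tendsto (fun t : ℝ => e s / t) atBot (nhds 0) := tendsto_const_nhds.div_atBot tendsto_id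
    have := (h2.sub hlim).div (h1.sub_const 1) (by norm_num)
    simp only [sub_self, zero_div] at this
    refine this.congr' ?_
    filter_upwards [eventually_lt_atBot 0, eventually_lt_atBot s] with t ht hts
    have h3 : s - t ≠ 0 := by linarith
    have h4 : s / t - 1 ≠ 0 := by
      rw [div_sub_one ht.ne]; exact div_ne_zero h3 ht.ne
    simp only [Pi.div_apply]
    rw [div_eq_div_iff h4 h3]
    have := ht.ne
    field_simp
  have le0 : ∀ s ≤ s0, G s ≤ 0 := by
    intro s hs
    have : G s ≤ 0 / 2 := by
      apply ge_of_tendsto ((slim s).div_const 2)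
      filter_upwards [eventually_lt_atBot s] with t hts
      obtain ⟨ξ, hξ, h⟩ := slope t s hts
      rw [h]
      have h3 : s - t ≠ 0 := by linarith
      have := anti (a := ξ) (b := s) (by simp; linarith [hξ.2]) hs hξ.2.le
      have h5 : 0 < exp (7 * ξ) := exp_pos _
      have : 2 * L ξ * (s - t) / (s - t) / 2 = L ξ := by field_simp
      rw [this]
      simp only [G] at *
      linarith
    linarith
  rw [Metric.tendsto_nhds]
  intro ε hε
  -- find a point where G > -ε/2
  have key : ∃ s1 ≤ s0, -ε/2 < G s1 := by
    by_contra hcon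
    push Not at hcon
    have hc2 : ∀ᶠ t in atBot, (e s0 - e t) / (s0 - t) ≤ -ε + 4/7 * exp (7 * s0) := by
      filter_upwards [eventually_lt_atBot s0] with t hts
      obtain ⟨ξ, hξ, h⟩ := slope t s0 hts
      have h3 : s0 - t ≠ 0 := by linarith
      rw [h, mul_div_cancel_right₀ _ h3]
      have := hcon ξ hξ.2.le
      have h6 : exp (7 * ξ) ≤ exp (7 * s0) := exp_le_exp.mpr (by linarith [hξ.2])
      simp only [G] at this
      linarith
    -- instead choose s2 small
    obtain ⟨s2, hs2, hs2'⟩ := ((eventually_le_atBot s0).and (hE.eventually (gt_mem_nhds (show (0:ℝ) < ε/2 by linarith)))).exists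
    have : (0:ℝ) ≤ -ε/2 := by
      apply le_of_tendsto (slim s2)
      filter_upwards [eventually_lt_atBot s2] with t hts
      obtain ⟨ξ, hξ, h⟩ := slope t s2 hts
      have h3 : s2 - t ≠ 0 := by linarith
      rw [h, mul_div_cancel_right₀ _ h3]
      have := hcon ξ (hξ.2.le.trans hs2)
      have h6 : exp (7 * ξ) ≤ exp (7 * s2) := exp_le_exp.mpr (by linarith [hξ.2])
      simp only [G] at this
      linarith
    linarith
  obtain ⟨s1, hs1, hs1'⟩ := key
  filter_upwards [eventually_le_atBot s1, hE.eventually (gt_mem_nhds (show (0:ℝ) < ε/2 by linarith))] with s hs hs'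
  have h1 := anti (a := s) (b := s1) (hs.trans hs1) hs1 hs
  have h2 := le0 s (hs.trans hs1)
  rw [dist_zero_right, norm_eq_abs, abs_lt]
  have := exp_pos (7 * s)
  simp only [G] at *
  constructor <;> linarith

/-- collected profile bounds below s0 -/
structure TTBd (e0 e4 L N : ℝ → ℝ) (s0 : ℝ) : Prop where
  neg : s0 ≤ 0
  E : ∀ s ≤ s0, 2 * e0 s ≤ -s
  T : ∀ s ≤ s0, exp (8 * s + 2 * e0 s) ≤ exp (7 * s)
  U : ∀ s ≤ s0, exp (e4 s - 2 * e0 s) ≤ exp (-s)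
  V : ∀ s ≤ s0, exp (2 * e0 s - 2 * e4 s) ≤ exp (-s)
  L : ∀ s ≤ s0, |L s| ≤ 1/4
  N : ∀ s ≤ s0, |N s| ≤ 1/4

lemma tt_small {e : ℝ → ℝ} (h : Tendsto (fun s => e s / s) atBot (nhds 0)) {δ : ℝ} (hδ : 0 < δ) :
    ∀ᶠ s in atBot, |e s| ≤ -(δ * s) := by
  filter_upwards [h.eventually (Metric.ball_mem_nhds 0 hδ), eventually_lt_atBot 0] with s hs hs0
  rw [dist_zero_right, norm_eq_abs, abs_div, abs_of_neg hs0, div_lt_iff₀ (by linarith)] at hs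
  linarith

lemma tt_LN {e0 e4 L N : ℝ → ℝ} (h : TTProf e0 e4 L N) :
    Tendsto L atBot (nhds 0) ∧ Tendsto N atBot (nhds 0) := by
  obtain ⟨s0, hs0⟩ := eventually_atBot.mp (tt_small h.lim0 (show (0:ℝ) < 1/2 by norm_num))
  have hτ : ∀ s ≤ s0, exp (8 * s + 2 * e0 s) ≤ exp (7 * s) := by
    intro s hs
    have := (abs_le.mp (hs0 s hs)).2
    exact exp_le_exp.mpr (by linarith)
  exact ⟨tt_lim h.he0 h.hL (fun s => (exp_pos _).le) hτ h.lim0,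
    tt_lim h.he4 h.hN (fun s => (exp_pos _).le) hτ h.lim4⟩

lemma tt_bd {e0 e4 L N : ℝ → ℝ} (h : TTProf e0 e4 L N) : ∃ s0, TTBd e0 e4 L N s0 := by
  obtain ⟨hL, hN⟩ := tt_LN h
  have e1 := tt_small h.lim0 (show (0:ℝ) < 1/4 by norm_num)
  have e2 := tt_small h.lim4 (show (0:ℝ) < 1/4 by norm_num)
  have e3 := hL.eventually (Metric.ball_mem_nhds 0 (show (0:ℝ) < 1/4 by norm_num))
  have e4 := hN.eventually (Metric.ball_mem_nhds 0 (show (0:ℝ) < 1/4 by norm_num))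
  obtain ⟨s0, hs0⟩ := eventually_atBot.mp (((e1.and e2).and (e3.and e4)).and (eventually_le_atBot 0))
  refine ⟨s0, (hs0 s0 le_rfl).2, ?_, ?_, ?_, ?_, ?_, ?_⟩ <;> intro s hs <;>
    obtain ⟨⟨⟨q1, q2⟩, q3, q4⟩, q5⟩ := hs0 s hs <;> rw [abs_le] at q1 q2
  · linarith
  · exact exp_le_exp.mpr (by linarith)
  · exact exp_le_exp.mpr (by linarith)
  · exact exp_le_exp.mpr (by linarith)
  · simpa using q3.le
  · simpa using q4.le

lemma tt_U0 {e0 e4 L N : ℝ → ℝ} (h : TTProf e0 e4 L N) :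
    Tendsto (fun s => exp (e4 s - 2 * e0 s)) atBot (nhds 0) := by
  obtain ⟨s0, hb⟩ := tt_bd h
  obtain ⟨hL, hN⟩ := tt_LN h
  have hE : Tendsto (fun s : ℝ => exp (7 * s)) atBot (nhds 0) :=
    tendsto_exp_atBot.comp (tendsto_id.const_mul_atBot (by norm_num))
  have hL1 : Tendsto (fun s => L (s - 1)) atBot (nhds 0) :=
    hL.comp (tendsto_atBot_add_const_right _ (-1) tendsto_id)
  have up : Tendsto (fun s => exp 2 * (exp (7 * s) - (L s - L (s-1))/2)) atBot (nhds 0) := by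
    have := (hE.sub ((hL.sub hL1).div_const 2)).const_mul (exp 2)
    simpa using this
  refine tendsto_of_tendsto_of_tendsto_of_le_of_le' tendsto_const_nhds up
    (Eventually.of_forall fun s => (exp_pos _).le) ?_
  filter_upwards [eventually_le_atBot s0] with s hs
  have hlt : s - 1 < s := by linarith
  obtain ⟨ξ, hξ, hx⟩ := exists_hasDerivAt_eq_slope L _ hlt
      (fun x _ => (h.hL x).continuousAt.continuousWithinAt) (fun x _ => h.hL x)
  have hg : ∀ x, HasDerivAt (fun s => e4 s - 2 * e0 s) (2 * N x - 2 * (2 * L x)) x := fun x =>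
    (h.he4 x).fun_sub ((h.he0 x).const_mul 2)
  obtain ⟨η, hη, hy⟩ := exists_hasDerivAt_eq_slope _ _ hξ.2
      (fun x _ => (hg x).continuousAt.continuousWithinAt) (fun x _ => hg x)
  rw [eq_div_iff (by linarith [hξ.2])] at hy
  have h1 := abs_le.mp (hb.L η (by linarith [hη.2]))
  have h2 := abs_le.mp (hb.N η (by linarith [hη.2]))
  have hs1 : e4 s - 2 * e0 s ≤ 2 + (e4 ξ - 2 * e0 ξ) := by
    have : (2 * N η - 2 * (2 * L η)) * (s - ξ) ≤ 2 * (s - ξ) := by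
      apply mul_le_mul_of_nonneg_right _ (by linarith [hξ.2])
      linarith
    have := hξ.1
    linarith
  have h3 := hb.T ξ (by linarith [hξ.2])
  have h4 : exp (7 * ξ) ≤ exp (7 * s) := exp_le_exp.mpr (by linarith [hξ.2])
  calc exp (e4 s - 2 * e0 s) ≤ exp (2 + (e4 ξ - 2 * e0 ξ)) := exp_le_exp.mpr hs1
    _ = exp 2 * exp (e4 ξ - 2 * e0 ξ) := exp_add _ _
    _ ≤ _ := by
      gcongr
      have : s - (s-1) = 1 := by ring
      rw [this, div_one] at hx
      linarith

end p3

section p4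

lemma tt_lim_int (y z : ℝ → ℝ → ℝ) (Y Z : ℝ → ℝ)
    (hy : ∀ a b, HasDerivAt (fun a => y a b) (z a b) a) (hz : ∀ b, Continuous (fun a => z a b))
    (hY : ∀ a, Tendsto (y a) atBot (nhds (Y a))) (hZ : ∀ a, Tendsto (z a) atBot (nhds (Z a)))
    (hb : ∀ A, ∃ C b1, ∀ a, |a| ≤ A → ∀ b ≤ b1, |z a b| ≤ C) (a a' : ℝ) :
    ∫ t in a'..a, Z t = Y a - Y a' := by
  obtain ⟨C, b1, hC⟩ := hb (max |a| |a'|)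
  have h1 : Tendsto (fun b => ∫ t in a'..a, z t b) atBot (nhds (∫ t in a'..a, Z t)) := by
    apply intervalIntegral.tendsto_integral_filter_of_dominated_convergence (fun _ => C)
    · exact Eventually.of_forall fun b => (hz b).aestronglyMeasurable
    · filter_upwards [eventually_le_atBot b1] with b hb
      filter_upwards with t ht
      apply hC t _ b hb
      have := Set.uIoc_subset_uIcc ht
      rw [abs_le]
      rw [Set.mem_uIcc] at this
      have q1 := le_max_left |a| |a'|
      have q2 := le_max_right |a| |a'|
      have q3 := abs_le.mp q1
      have q4 := abs_le.mp q2
      rcases this with h | h <;> constructor <;> linarith [h.1, h.2]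
    · simp
    · filter_upwards with t ht using hZ t
  have h2 : ∀ b, ∫ t in a'..a, z t b = y a b - y a' b := fun b =>
    intervalIntegral.integral_eq_sub_of_hasDerivAt (fun t _ => hy t b) ((hz b).intervalIntegrable _ _)
  simp only [h2] at h1
  exact tendsto_nhds_unique h1 ((hY a).sub (hY a'))

lemma tt_lim_cont (y z : ℝ → ℝ → ℝ) (Y Z : ℝ → ℝ)
    (hy : ∀ a b, HasDerivAt (fun a => y a b) (z a b) a) (hz : ∀ b, Continuous (fun a => z a b))
    (hY : ∀ a, Tendsto (y a) atBot (nhds (Y a))) (hZ : ∀ a, Tendsto (z a) atBot (nhds (Z a)))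
    (hb : ∀ A, ∃ C b1, ∀ a, |a| ≤ A → ∀ b ≤ b1, |z a b| ≤ C) : Continuous Y := by
  rw [continuous_iff_continuousAt]
  intro a
  obtain ⟨C, b1, hC⟩ := hb (|a|+1)
  have hZC : ∀ t, |t| ≤ |a|+1 → |Z t| ≤ C := by
    intro t ht
    apply le_of_tendsto (hZ t).abs
    filter_upwards [eventually_le_atBot b1] with b hb using hC t ht b hb
  rw [ContinuousAt, tendsto_iff_norm_sub_tendsto_zero]
  have h1 : Tendsto (fun x => C * |x - a|) (nhds a) (nhds 0) := by
    have : Continuous (fun x => C * |x - a|) := by fun_prop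
    simpa using this.tendsto a
  refine squeeze_zero' (Eventually.of_forall fun _ => norm_nonneg _) ?_ h1
  filter_upwards [Metric.ball_mem_nhds a one_pos] with x hx
  rw [← tt_lim_int y z Y Z hy hz hY hZ hb x a]
  apply intervalIntegral.norm_integral_le_of_norm_le_const
  intro t ht
  apply hZC
  have := Set.uIoc_subset_uIcc ht
  rw [Metric.mem_ball, Real.dist_eq, abs_lt] at hx
  rw [Set.mem_uIcc] at this
  rw [abs_le]
  have q := abs_le.mp (le_refl |a|)
  rcases this with h | h <;> constructor <;> linarith [h.1, h.2, hx.1, hx.2]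

lemma tt_lim_deriv (y z : ℝ → ℝ → ℝ) (Y Z : ℝ → ℝ)
    (hy : ∀ a b, HasDerivAt (fun a => y a b) (z a b) a) (hz : ∀ b, Continuous (fun a => z a b))
    (hY : ∀ a, Tendsto (y a) atBot (nhds (Y a))) (hZ : ∀ a, Tendsto (z a) atBot (nhds (Z a)))
    (hb : ∀ A, ∃ C b1, ∀ a, |a| ≤ A → ∀ b ≤ b1, |z a b| ≤ C) (hZc : Continuous Z) (a : ℝ) :
    HasDerivAt Y (Z a) a := by
  have : Y = fun a => Y 0 + ∫ t in (0:ℝ)..a, Z t := by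
    ext a
    rw [tt_lim_int y z Y Z hy hz hY hZ hb a 0]; ring
  rw [this]
  exact (intervalIntegral.integral_hasDerivAt_right (hZc.intervalIntegrable _ _)
    (hZc.stronglyMeasurableAtFilter _ _) hZc.continuousAt).const_add _

structure TTChain (H : Fin 4 → ℝ → ℝ) : Prop where
  nn : ∀ i a, 0 ≤ H i a
  d0 : ∀ a, HasDerivAt (H 0) (-H 1 a) a
  d1 : ∀ a, HasDerivAt (H 1) (-H 2 a) a
  d2 : ∀ a, HasDerivAt (H 2) (-H 3 a) a
  d3 : ∀ a, HasDerivAt (H 3) (-(exp (4 * a) * H 0 a)) a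

lemma tt_sec_bdd {e0 e4 L N : ℝ → ℝ} (h : TTProf e0 e4 L N) {s0 : ℝ} (hb : TTBd e0 e4 L N s0)
    {y : Fin 4 → ℝ → ℝ → ℝ} (hy : TTSec e0 e4 L N y) (hp : ∀ i a b, 0 ≤ y i a b) (A : ℝ) :
    ∃ C b1, ∀ a, |a| ≤ A → ∀ b ≤ b1, (∀ i, y i a b ≤ C) ∧ (a + b)/2 ≤ s0 := by
  let K : ℝ → ℝ → ℝ := fun a b => -L ((a+b)/2) - N ((a+b)/2) + 4/7 * exp (7 * ((a+b)/2))
    + 2/7 * exp (7/2 * b - a/2)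
  let S : ℝ → ℝ → ℝ := fun a b => y 0 a b + y 1 a b + y 2 a b + y 3 a b
  have cL : Continuous L := continuous_iff_continuousAt.mpr fun t => (h.hL t).continuousAt
  have cN : Continuous N := continuous_iff_continuousAt.mpr fun t => (h.hN t).continuousAt
  have dK : ∀ a b, HasDerivAt (fun b => K a b)
      (-(exp (8 * ((a+b)/2) + 2 * e0 ((a+b)/2)) - exp (e4 ((a+b)/2) - 2 * e0 ((a+b)/2)))
       - (exp (8 * ((a+b)/2) + 2 * e0 ((a+b)/2)) - exp (2 * e0 ((a+b)/2) - 2 * e4 ((a+b)/2)))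
       + 2 * exp (7 * ((a+b)/2)) + exp (7/2 * b - a/2)) b := by
    intro a b
    have q1 := hda_half' a b (h.hL ((a+b)/2))
    have q2 := hda_half' a b (h.hN ((a+b)/2))
    have q3 := hda_half' a b ((((hasDerivAt_id ((a+b)/2)).const_mul 7).exp).const_mul (4/7))
    have q4 := ((((hasDerivAt_id b).const_mul (7/2)).sub_const (a/2)).exp).const_mul (2/7)
    refine (((q1.fun_neg.fun_sub q2).fun_add q3).fun_add q4).congr_deriv ?_
    simp
    ring
  have dS : ∀ a b, HasDerivAt (fun b => S a b)
      (-(exp (4*b + 2 * e0 ((a+b)/2)) * y 3 a b) + -(exp (e4 ((a+b)/2) - 2 * e0 ((a+b)/2)) * y 0 a b)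
       + -(exp (2 * e0 ((a+b)/2) - 2 * e4 ((a+b)/2)) * y 1 a b)
       + -(exp (e4 ((a+b)/2) - 2 * e0 ((a+b)/2)) * y 2 a b)) b := by
    intro a b
    exact (((hy.b0 a b).fun_add (hy.b1 a b)).fun_add (hy.b2 a b)).fun_add (hy.b3 a b)
  have mono : ∀ a, MonotoneOn (fun b => S a b * exp (K a b)) (Set.Iic (2 * s0 - a)) := by
    intro a
    have dd := fun b => (dS a b).fun_mul (dK a b).exp
    apply monotoneOn_of_deriv_nonneg (convex_Iic _)
    · exact fun x _ => (dd x).continuousAt.continuousWithinAt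
    · exact fun x _ => (dd x).differentiableAt.differentiableWithinAt
    · intro b hx
      rw [interior_Iic, Set.mem_Iio] at hx
      rw [(dd b).deriv]
      have hs : (a+b)/2 ≤ s0 := by linarith
      have t1 := hb.T _ hs
      have t2 : exp (4*b + 2 * e0 ((a+b)/2)) ≤ exp (7/2 * b - a/2) :=
        exp_le_exp.mpr (by linarith [hb.E _ hs])
      set u := exp (e4 ((a+b)/2) - 2 * e0 ((a+b)/2))
      set v := exp (2 * e0 ((a+b)/2) - 2 * e4 ((a+b)/2))
      set β := exp (4*b + 2 * e0 ((a+b)/2))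
      set β' := exp (7/2 * b - a/2)
      set τ := exp (8 * ((a+b)/2) + 2 * e0 ((a+b)/2))
      set τ' := exp (7 * ((a+b)/2))
      have hu : 0 < u := exp_pos _
      have hv : 0 < v := exp_pos _
      have hβ : 0 < β := exp_pos _
      have p0 := hp 0 a b
      have p1 := hp 1 a b
      have p2 := hp 2 a b
      have p3 := hp 3 a b
      have key : 0 ≤ (-(β * y 3 a b) + -(u * y 0 a b) + -(v * y 1 a b) + -(u * y 2 a b))
          + S a b * (-(τ - u) - (τ - v) + 2 * τ' + β') := by
        have q1 : S a b * (u + v + β) ≤ S a b * (-(τ - u) - (τ - v) + 2 * τ' + β') := by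
          apply mul_le_mul_of_nonneg_left _ (by simp only [S]; positivity)
          linarith
        have q2 : 0 ≤ S a b * (u + v + β) - (β * y 3 a b + u * y 0 a b + v * y 1 a b + u * y 2 a b) := by
          have : S a b * (u + v + β) - (β * y 3 a b + u * y 0 a b + v * y 1 a b + u * y 2 a b)
            = u * (y 1 a b + y 3 a b) + v * (y 0 a b + y 2 a b + y 3 a b) + β * (y 0 a b + y 1 a b + y 2 a b) := by
            simp only [S]; ring
          rw [this]; positivity
        linarith
      have := mul_nonneg key (exp_pos (K a b)).le
      linarith
  have hKc : ∀ b, Continuous fun a => K a b := by intro b; simp only [K]; fun_prop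
  have hSc : ∀ b, Continuous fun a => S a b := by
    intro b
    refine continuous_iff_continuousAt.mpr fun a => ?_
    exact ((((hy.a0 a b).fun_add (hy.a1 a b)).fun_add (hy.a2 a b)).fun_add (hy.a3 a b)).continuousAt
  obtain ⟨C, hC⟩ := (isCompact_Icc (a := -A) (b := A)).exists_bound_of_continuousOn
    (f := fun a => S a (2 * s0 - A) * exp (K a (2 * s0 - A)))
    ((hSc _).mul (continuous_exp.comp (hKc _))).continuousOn
  refine ⟨C * exp (1/2), 2 * s0 - A, fun a ha b hbb => ?_⟩
  rw [abs_le] at ha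
  have hs : (a+b)/2 ≤ s0 := by linarith
  have q1 := (mono a) (show b ∈ Set.Iic (2 * s0 - a) by rw [Set.mem_Iic]; linarith)
    (show 2 * s0 - A ∈ Set.Iic (2 * s0 - a) by rw [Set.mem_Iic]; linarith) hbb
  have q2 := (le_abs_self _).trans (hC a ha)
  have q3 : -(1/2) ≤ K a b := by
    have := abs_le.mp (hb.L _ hs)
    have := abs_le.mp (hb.N _ hs)
    have : 0 < exp (7 * ((a+b)/2)) := exp_pos _
    have : 0 < exp (7/2 * b - a/2) := exp_pos _
    simp only [K]; linarith
  have q4 : S a b ≤ C * exp (1/2) := by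
    have hS0 : 0 ≤ S a b := by
      have p0 := hp 0 a b
      have p1 := hp 1 a b
      have p2 := hp 2 a b
      have p3 := hp 3 a b
      simp only [S]; positivity
    have q5 : S a b * exp (-(1/2)) ≤ C :=
      (mul_le_mul_of_nonneg_left (exp_le_exp.mpr q3) hS0).trans (q1.trans q2)
    rw [exp_neg, ← div_eq_mul_inv, div_le_iff₀ (exp_pos _)] at q5
    exact q5
  have p0 := hp 0 a b
  have p1 := hp 1 a b
  have p2 := hp 2 a b
  have p3 := hp 3 a b
  simp only [S] at q4
  refine ⟨fun i => ?_, hs⟩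
  fin_cases i <;> simp <;> linarith

theorem tt_H {e0 e4 L N : ℝ → ℝ} (h : TTProf e0 e4 L N)
    {y : Fin 4 → ℝ → ℝ → ℝ} (hy : TTSec e0 e4 L N y) (hp : ∀ i a b, 0 ≤ y i a b) :
    ∃ H : Fin 4 → ℝ → ℝ, TTChain H ∧ (∀ i a, Tendsto (y i a) atBot (nhds (H i a))) ∧
      ∀ i a b, y i a b ≤ H i a := by
  obtain ⟨s0, hb⟩ := tt_bd h
  obtain ⟨hL, hN⟩ := tt_LN h
  have cL : Continuous L := continuous_iff_continuousAt.mpr fun t => (h.hL t).continuousAt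
  have cN : Continuous N := continuous_iff_continuousAt.mpr fun t => (h.hN t).continuousAt
  have bd := tt_sec_bdd h hb hy hp
  have anti : ∀ i a, Antitone (y i a) := by
    intro i a
    have gen : ∀ (f : ℝ → ℝ) (c : ℝ → ℝ), (∀ b, 0 ≤ c b) → (∀ b, HasDerivAt f (-(c b)) b) → Antitone f := by
      intro f c hc hf
      apply antitone_of_deriv_nonpos (fun b => (hf b).differentiableAt)
      intro b; rw [(hf b).deriv]; linarith [hc b]
    fin_cases i
    · exact gen _ _ (fun b => mul_nonneg (exp_pos _).le (hp _ _ _)) (hy.b0 a)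
    · exact gen _ _ (fun b => mul_nonneg (exp_pos _).le (hp _ _ _)) (hy.b1 a)
    · exact gen _ _ (fun b => mul_nonneg (exp_pos _).le (hp _ _ _)) (hy.b2 a)
    · exact gen _ _ (fun b => mul_nonneg (exp_pos _).le (hp _ _ _)) (hy.b3 a)
  have bdd : ∀ i a, BddAbove (Set.range (y i a)) := by
    intro i a
    obtain ⟨C, b1, hC⟩ := bd |a|
    refine ⟨C, ?_⟩
    rintro _ ⟨b, rfl⟩
    rcases le_total b b1 with hbb | hbb
    · exact (hC a le_rfl b hbb).1 i
    · exact (anti i a hbb).trans ((hC a le_rfl b1 le_rfl).1 i)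
  let H : Fin 4 → ℝ → ℝ := fun i a => ⨆ b, y i a b
  have hH : ∀ i a, Tendsto (y i a) atBot (nhds (H i a)) := fun i a =>
    tendsto_atBot_ciSup (anti i a) (bdd i a)
  have hle : ∀ i a b, y i a b ≤ H i a := fun i a b => le_ciSup (bdd i a) b
  have half : ∀ a : ℝ, Tendsto (fun b => (a+b)/2) atBot atBot := fun a =>
    (tendsto_atBot_add_const_left _ a tendsto_id).atBot_div_const (by norm_num)
  have lL : ∀ a, Tendsto (fun b => L ((a+b)/2)) atBot (nhds 0) := fun a => hL.comp (half a)
  have lN : ∀ a, Tendsto (fun b => N ((a+b)/2)) atBot (nhds 0) := fun a => hN.comp (half a)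
  have c0 : ∀ b, Continuous fun a => y 0 a b := fun b => continuous_iff_continuousAt.mpr fun a => (hy.a0 a b).continuousAt
  have c1 : ∀ b, Continuous fun a => y 1 a b := fun b => continuous_iff_continuousAt.mpr fun a => (hy.a1 a b).continuousAt
  have c2 : ∀ b, Continuous fun a => y 2 a b := fun b => continuous_iff_continuousAt.mpr fun a => (hy.a2 a b).continuousAt
  have c3 : ∀ b, Continuous fun a => y 3 a b := fun b => continuous_iff_continuousAt.mpr fun a => (hy.a3 a b).continuousAt
  have z0 : ∀ a, Tendsto (fun b => L ((a+b)/2) * y 0 a b - y 1 a b) atBot (nhds (-H 1 a)) := fun a => by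
    simpa using ((lL a).mul (hH 0 a)).sub (hH 1 a)
  have z1 : ∀ a, Tendsto (fun b => (N ((a+b)/2) - L ((a+b)/2)) * y 1 a b - y 2 a b) atBot (nhds (-H 2 a)) := fun a => by
    simpa using (((lN a).sub (lL a)).mul (hH 1 a)).sub (hH 2 a)
  have z2 : ∀ a, Tendsto (fun b => -(N ((a+b)/2) - L ((a+b)/2)) * y 2 a b - y 3 a b) atBot (nhds (-H 3 a)) := fun a => by
    simpa using ((((lN a).sub (lL a)).neg).mul (hH 2 a)).sub (hH 3 a)
  have z3 : ∀ a, Tendsto (fun b => -L ((a+b)/2) * y 3 a b - exp (4*a) * y 0 a b) atBot (nhds (-(exp (4*a) * H 0 a))) := fun a => by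
    simpa using (((lL a).neg).mul (hH 3 a)).sub ((hH 0 a).const_mul (exp (4*a)))
  have bnd : ∀ (l p q C e: ℝ), |l| ≤ 1 → 0 ≤ p → 0 ≤ q → p ≤ C → q ≤ C → 0 ≤ e → |l * p - e * q| ≤ C + e * C := by
    intro l p q C e h1 h2 h3 h4 h5 he
    refine (abs_sub _ _).trans ?_
    rw [abs_mul, abs_mul, abs_of_nonneg h2, abs_of_nonneg h3, abs_of_nonneg he]
    have : |l| * p ≤ 1 * C := by gcongr
    have : e * q ≤ e * C := by gcongr
    linarith
  have b0 : ∀ A, ∃ C b1, ∀ a, |a| ≤ A → ∀ b ≤ b1, |L ((a+b)/2) * y 0 a b - y 1 a b| ≤ C := by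
    intro A
    obtain ⟨C, b1, hC⟩ := bd A
    refine ⟨C + 1 * C, b1, fun a ha b hbb => ?_⟩
    obtain ⟨q, qs⟩ := hC a ha b hbb
    have := bnd (L ((a+b)/2)) (y 0 a b) (y 1 a b) C 1 (by linarith [hb.L _ qs]) (hp _ _ _) (hp _ _ _) (q _) (q _) (by norm_num)
    simpa using this
  have b1 : ∀ A, ∃ C b1, ∀ a, |a| ≤ A → ∀ b ≤ b1, |(N ((a+b)/2) - L ((a+b)/2)) * y 1 a b - y 2 a b| ≤ C := by
    intro A
    obtain ⟨C, b1, hC⟩ := bd A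
    refine ⟨C + 1 * C, b1, fun a ha b hbb => ?_⟩
    obtain ⟨q, qs⟩ := hC a ha b hbb
    have := bnd (N ((a+b)/2) - L ((a+b)/2)) (y 1 a b) (y 2 a b) C 1
      ((abs_sub _ _).trans (by linarith [hb.L _ qs, hb.N _ qs])) (hp _ _ _) (hp _ _ _) (q _) (q _) (by norm_num)
    simpa using this
  have b2 : ∀ A, ∃ C b1, ∀ a, |a| ≤ A → ∀ b ≤ b1, |-(N ((a+b)/2) - L ((a+b)/2)) * y 2 a b - y 3 a b| ≤ C := by
    intro A
    obtain ⟨C, b1, hC⟩ := bd A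
    refine ⟨C + 1 * C, b1, fun a ha b hbb => ?_⟩
    obtain ⟨q, qs⟩ := hC a ha b hbb
    have := bnd (-(N ((a+b)/2) - L ((a+b)/2))) (y 2 a b) (y 3 a b) C 1
      (by rw [abs_neg]; exact (abs_sub _ _).trans (by linarith [hb.L _ qs, hb.N _ qs])) (hp _ _ _) (hp _ _ _) (q _) (q _) (by norm_num)
    simpa using this
  have b3 : ∀ A, ∃ C b1, ∀ a, |a| ≤ A → ∀ b ≤ b1, |-L ((a+b)/2) * y 3 a b - exp (4*a) * y 0 a b| ≤ C := by
    intro A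
    obtain ⟨C, b1, hC⟩ := bd A
    refine ⟨C + exp (4 * A) * C, b1, fun a ha b hbb => ?_⟩
    obtain ⟨q, qs⟩ := hC a ha b hbb
    have hC0 : 0 ≤ C := (hp 0 a b).trans (q 0)
    refine (bnd (-L ((a+b)/2)) (y 3 a b) (y 0 a b) C (exp (4*a))
      (by rw [abs_neg]; linarith [hb.L _ qs]) (hp _ _ _) (hp _ _ _) (q _) (q _) (exp_pos _).le).trans ?_
    gcongr
    exact (abs_le.mp ha).2
  have k0 : Continuous (H 0) := tt_lim_cont (y 0) _ _ _ hy.a0 (fun b => by have := c0 b; have := c1 b; fun_prop) (hH 0) z0 b0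
  have k1 : Continuous (H 1) := tt_lim_cont (y 1) _ _ _ hy.a1 (fun b => by have := c1 b; have := c2 b; fun_prop) (hH 1) z1 b1
  have k2 : Continuous (H 2) := tt_lim_cont (y 2) _ _ _ hy.a2 (fun b => by have := c2 b; have := c3 b; fun_prop) (hH 2) z2 b2
  have k3 : Continuous (H 3) := tt_lim_cont (y 3) _ _ _ hy.a3 (fun b => by have := c3 b; have := c0 b; fun_prop) (hH 3) z3 b3
  refine ⟨H, ⟨fun i a => (hp i a 0).trans (hle i a 0), ?_, ?_, ?_, ?_⟩, hH, hle⟩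
  · exact tt_lim_deriv (y 0) _ _ _ hy.a0 (fun b => by have := c0 b; have := c1 b; fun_prop) (hH 0) z0 b0 (by fun_prop)
  · exact tt_lim_deriv (y 1) _ _ _ hy.a1 (fun b => by have := c1 b; have := c2 b; fun_prop) (hH 1) z1 b1 (by fun_prop)
  · exact tt_lim_deriv (y 2) _ _ _ hy.a2 (fun b => by have := c2 b; have := c3 b; fun_prop) (hH 2) z2 b2 (by fun_prop)
  · exact tt_lim_deriv (y 3) _ _ _ hy.a3 (fun b => by have := c3 b; have := c0 b; fun_prop) (hH 3) z3 b3 (by fun_prop)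

end p4

section p5

lemma tt_tail {D D' : ℝ → ℝ} {t0 K c : ℝ} (hc : 0 < c) (hD : ∀ t ≤ t0, HasDerivAt D (D' t) t)
    (hb : ∀ t ≤ t0, |D' t| ≤ K * exp (c * t)) :
    ∃ l, ∀ t ≤ t0, |D t - l| ≤ K / c * exp (c * t) := by
  have hK : 0 ≤ K := by
    have := (abs_nonneg _).trans (hb t0 le_rfl)
    exact nonneg_of_mul_nonneg_left this (exp_pos _)
  have dE : ∀ t, HasDerivAt (fun t => K / c * exp (c * t)) (K * exp (c * t)) t := by
    intro t
    refine ((((hasDerivAt_id t).const_mul c).exp).const_mul (K/c)).congr_deriv ?_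
    simp
    field_simp
  have mono : MonotoneOn (fun t => D t + K / c * exp (c * t)) (Set.Iic t0) := by
    have dd := fun t (ht : t ≤ t0) => (hD t ht).fun_add (dE t)
    apply monotoneOn_of_deriv_nonneg (convex_Iic _)
    · exact fun x hx => (dd x hx).continuousAt.continuousWithinAt
    · intro x hx; rw [interior_Iic] at hx; exact (dd x hx.le).differentiableAt.differentiableWithinAt
    · intro x hx
      rw [interior_Iic] at hx
      rw [(dd x hx.le).deriv]
      linarith [(abs_le.mp (hb x hx.le)).1]
  have anti : AntitoneOn (fun t => D t - K / c * exp (c * t)) (Set.Iic t0) := by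
    have dd := fun t (ht : t ≤ t0) => (hD t ht).fun_sub (dE t)
    apply antitoneOn_of_deriv_nonpos (convex_Iic _)
    · exact fun x hx => (dd x hx).continuousAt.continuousWithinAt
    · intro x hx; rw [interior_Iic] at hx; exact (dd x hx.le).differentiableAt.differentiableWithinAt
    · intro x hx
      rw [interior_Iic] at hx
      rw [(dd x hx.le).deriv]
      linarith [(abs_le.mp (hb x hx.le)).2]
  have cross : ∀ t ≤ t0, ∀ t' ≤ t0, D t - K / c * exp (c * t) ≤ D t' + K / c * exp (c * t') := by
    intro t ht t' ht'
    have h1 := anti (show min t t' ∈ Set.Iic t0 from (min_le_left _ _).trans ht) ht (min_le_left _ _)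
    have h2 := mono (show min t t' ∈ Set.Iic t0 from (min_le_left _ _).trans ht) ht' (min_le_right _ _)
    have h3 : 0 ≤ K / c * exp (c * (min t t')) := by positivity
    simp only at h1 h2
    linarith
  refine ⟨sSup ((fun t => D t - K / c * exp (c * t)) '' Set.Iic t0), fun t ht => ?_⟩
  have bdd : BddAbove ((fun t => D t - K / c * exp (c * t)) '' Set.Iic t0) := by
    refine ⟨D t0 + K / c * exp (c * t0), ?_⟩
    rintro _ ⟨x, hx, rfl⟩
    exact cross x hx t0 le_rfl
  have h1 := le_csSup bdd (Set.mem_image_of_mem (fun t => D t - K / c * exp (c * t)) (show t ∈ Set.Iic t0 from ht))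
  have h2 : sSup ((fun t => D t - K / c * exp (c * t)) '' Set.Iic t0) ≤ D t + K / c * exp (c * t) := by
    apply csSup_le (Set.Nonempty.image _ (⟨t0, Set.mem_Iic.mpr le_rfl⟩ : (Set.Iic t0).Nonempty))
    rintro _ ⟨x, hx, rfl⟩
    exact cross x hx t ht
  rw [abs_le]
  constructor <;> linarith

lemma tt_tail0 {D D' : ℝ → ℝ} {t0 K c : ℝ} (hc : 0 < c) (hD : ∀ t ≤ t0, HasDerivAt D (D' t) t)
    (hb : ∀ t ≤ t0, |D' t| ≤ K * exp (c * t)) (h0 : Tendsto D atBot (nhds 0)) :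
    ∀ t ≤ t0, |D t| ≤ K / c * exp (c * t) := by
  obtain ⟨l, hl⟩ := tt_tail hc hD hb
  have hE : Tendsto (fun t : ℝ => K / c * exp (c * t)) atBot (nhds 0) := by
    have := (tendsto_exp_atBot.comp (tendsto_id.const_mul_atBot hc)).const_mul (K / c)
    simpa using this
  have : Tendsto D atBot (nhds l) := by
    rw [tendsto_iff_norm_sub_tendsto_zero]
    refine squeeze_zero' (Eventually.of_forall fun _ => norm_nonneg _) ?_ hE
    filter_upwards [eventually_le_atBot t0] with t ht using hl t ht
  have hl0 := tendsto_nhds_unique this h0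
  subst hl0
  simpa using hl

lemma tt_chain_anti {H : Fin 4 → ℝ → ℝ} (h : TTChain H) (i : Fin 4) : Antitone (H i) := by
  have gen : ∀ (f : ℝ → ℝ) (c : ℝ → ℝ), (∀ b, 0 ≤ c b) → (∀ b, HasDerivAt f (-(c b)) b) → Antitone f := by
    intro f c hc hf
    apply antitone_of_deriv_nonpos (fun b => (hf b).differentiableAt)
    intro b; rw [(hf b).deriv]; linarith [hc b]
  fin_cases i
  · exact gen _ _ (h.nn 1) h.d0
  · exact gen _ _ (h.nn 2) h.d1
  · exact gen _ _ (h.nn 3) h.d2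
  · exact gen _ _ (fun a => mul_nonneg (exp_pos _).le (h.nn 0 a)) h.d3

lemma tt_chain_growth {H : Fin 4 → ℝ → ℝ} (h : TTChain H) {δ : ℝ} (hδ : 0 < δ) (hδ1 : δ ≤ 1) :
    ∃ C, 0 ≤ C ∧ ∀ i, ∀ a ≤ 0, H i a ≤ C * exp (-(δ * a)) := by
  let G : ℝ → ℝ := fun a => H 0 a + δ⁻¹ * H 1 a + δ⁻¹^2 * H 2 a + δ⁻¹^3 * H 3 a
  have dG : ∀ a, HasDerivAt G (-H 1 a + δ⁻¹ * (-H 2 a) + δ⁻¹^2 * (-H 3 a) + δ⁻¹^3 * (-(exp (4 * a) * H 0 a))) a :=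
    fun a => (((h.d0 a).fun_add ((h.d1 a).const_mul _)).fun_add ((h.d2 a).const_mul _)).fun_add ((h.d3 a).const_mul _)
  have dE : ∀ a, HasDerivAt (fun a => exp (δ * a)) (exp (δ * a) * δ) a := fun a =>
    (((hasDerivAt_id a).const_mul δ).exp).congr_deriv (by simp)
  have hinv : 1 ≤ δ⁻¹ := (one_le_inv₀ hδ).mpr hδ1
  have hlog : log δ ≤ 0 := log_nonpos hδ.le hδ1
  have mono : MonotoneOn (fun a => G a * exp (δ * a)) (Set.Iic (log δ)) := by
    have dd := fun a => (dG a).fun_mul (dE a)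
    apply monotoneOn_of_deriv_nonneg (convex_Iic _)
    · exact fun x hx => (dd x).continuousAt.continuousWithinAt
    · exact fun x hx => (dd x).differentiableAt.differentiableWithinAt
    · intro a ha
      rw [interior_Iic, Set.mem_Iio] at ha
      rw [(dd a).deriv]
      have e4 : exp (4 * a) ≤ δ^4 := by
        have : δ^4 = exp (4 * log δ) := by
          rw [mul_comm, exp_mul, exp_log hδ]; norm_cast
        rw [this]; exact exp_le_exp.mpr (by linarith)
      have key : 0 ≤ (-H 1 a + δ⁻¹ * (-H 2 a) + δ⁻¹^2 * (-H 3 a) + δ⁻¹^3 * (-(exp (4 * a) * H 0 a))) + G a * δ := by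
        have : (-H 1 a + δ⁻¹ * (-H 2 a) + δ⁻¹^2 * (-H 3 a) + δ⁻¹^3 * (-(exp (4 * a) * H 0 a))) + G a * δ
            = δ⁻¹^3 * H 0 a * (δ^4 - exp (4*a)) := by
          simp only [G]; field_simp; ring
        rw [this]
        have := h.nn 0 a
        have : 0 ≤ δ^4 - exp (4*a) := by linarith
        positivity
      have := mul_nonneg key (exp_pos (δ * a)).le
      linarith
  have hG0 : ∀ a, 0 ≤ G a := fun a => by
    have := h.nn 0 a
    have := h.nn 1 a
    have := h.nn 2 a
    have := h.nn 3 a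
    simp only [G]; positivity
  have antiG : Antitone G := by
    intro a b hab
    have q0 := tt_chain_anti h 0 hab
    have q1 := tt_chain_anti h 1 hab
    have q2 := tt_chain_anti h 2 hab
    have q3 := tt_chain_anti h 3 hab
    simp only [G]; gcongr
  have main : ∀ a ≤ 0, G a ≤ G (log δ) * exp (-(δ * a)) := by
    intro a ha
    rcases le_total a (log δ) with h1 | h1
    · have h2 := mono h1 (Set.mem_Iic.mpr le_rfl) h1
      simp only at h2
      have h3 : exp (δ * log δ) ≤ 1 := by
        rw [exp_le_one_iff]; nlinarith
      have h4 : G (log δ) * exp (δ * log δ) ≤ G (log δ) * 1 := mul_le_mul_of_nonneg_left h3 (hG0 _)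
      rw [exp_neg, ← div_eq_mul_inv, le_div_iff₀ (exp_pos _)]
      linarith
    · have h2 := antiG h1
      have h3 : 1 ≤ exp (-(δ * a)) := by
        rw [one_le_exp_iff]; nlinarith
      nlinarith [hG0 (log δ)]
  refine ⟨G (log δ), hG0 _, fun i a ha => le_trans ?_ (main a ha)⟩
  have p0 := h.nn 0 a
  have p1 := h.nn 1 a
  have p2 := h.nn 2 a
  have p3 := h.nn 3 a
  have i2 : 1 ≤ δ⁻¹^2 := one_le_pow₀ hinv
  have i3 : 1 ≤ δ⁻¹^3 := one_le_pow₀ hinv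
  have r1 : H 1 a ≤ δ⁻¹ * H 1 a := le_mul_of_one_le_left p1 hinv
  have r2 : H 2 a ≤ δ⁻¹^2 * H 2 a := le_mul_of_one_le_left p2 i2
  have r3 : H 3 a ≤ δ⁻¹^3 * H 3 a := le_mul_of_one_le_left p3 i3
  simp only [G]
  fin_cases i <;> simp only [Fin.zero_eta, Fin.mk_one, Fin.reduceFinMk] <;> linarith

structure TTPoly (H : Fin 4 → ℝ → ℝ) (q0 q1 q2 q3 C : ℝ) : Prop where
  nn : 0 ≤ C
  p0 : ∀ a ≤ 0, |H 0 a - (q0 - q1 * a + q2 * a^2 / 2 - q3 * a^3 / 6)| ≤ C * exp (3 * a)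
  p1 : ∀ a ≤ 0, |H 1 a - (q1 - q2 * a + q3 * a^2 / 2)| ≤ C * exp (3 * a)
  p2 : ∀ a ≤ 0, |H 2 a - (q2 - q3 * a)| ≤ C * exp (3 * a)
  p3 : ∀ a ≤ 0, |H 3 a - q3| ≤ C * exp (3 * a)

lemma tt_chain_poly {H : Fin 4 → ℝ → ℝ} (h : TTChain H) :
    ∃ q0 q1 q2 q3 C, TTPoly H q0 q1 q2 q3 C := by
  obtain ⟨C, hC0, hC⟩ := tt_chain_growth h one_pos le_rfl
  have le3 : ∀ x e : ℝ, 0 ≤ e → 0 ≤ x → x / 3 * e ≤ x * e := fun x e he hx => by nlinarith [mul_nonneg hx he]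
  have E := fun a : ℝ => (exp_pos (3 * a)).le
  obtain ⟨q3, h3⟩ := tt_tail (D := H 3) (t0 := 0) (K := C) (c := 3) (by norm_num) (fun t _ => h.d3 t) (by
    intro t ht
    rw [abs_neg, abs_of_nonneg (mul_nonneg (exp_pos _).le (h.nn 0 t))]
    have : exp (3 * t) = exp (4 * t) * exp (-(1 * t)) := by rw [← exp_add]; ring_nf
    rw [this, mul_left_comm]
    exact mul_le_mul_of_nonneg_left (hC 0 t ht) (exp_pos _).le)
  have h3' : ∀ a ≤ 0, |H 3 a - q3| ≤ C * exp (3 * a) := fun a ha => (h3 a ha).trans (le3 _ _ (E a) hC0)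
  obtain ⟨q2, h2⟩ := tt_tail (D := fun a => H 2 a + q3 * a) (D' := fun a => -H 3 a + q3 * 1) (t0 := 0) (K := C) (c := 3) (by norm_num)
    (fun t _ => (h.d2 t).fun_add ((hasDerivAt_id t).const_mul q3)) (by
    intro t ht
    rw [← abs_neg]
    have := h3' t ht
    ring_nf at this ⊢
    exact this)
  have h2' : ∀ a ≤ 0, |H 2 a - (q2 - q3 * a)| ≤ C * exp (3 * a) := fun a ha => by
    have := (h2 a ha).trans (le3 _ _ (E a) hC0)
    rwa [show H 2 a - (q2 - q3 * a) = H 2 a + q3 * a - q2 by ring]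
  obtain ⟨q1, h1⟩ := tt_tail (D := fun a => H 1 a + (q2 * a - q3/2 * a^2)) (D' := fun a => -H 2 a + (q2 * 1 - q3/2 * (2 * a))) (t0 := 0) (K := C) (c := 3) (by norm_num)
    (fun t _ => (h.d1 t).fun_add (((hasDerivAt_id t).const_mul q2).fun_sub (((hasDerivAt_pow 2 t).const_mul (q3/2)).congr_deriv (by norm_num)))) (by
    intro t ht
    rw [← abs_neg]
    have := h2' t ht
    ring_nf at this ⊢
    exact this)
  have h1' : ∀ a ≤ 0, |H 1 a - (q1 - q2 * a + q3 * a^2 / 2)| ≤ C * exp (3 * a) := fun a ha => by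
    have := (h1 a ha).trans (le3 _ _ (E a) hC0)
    rwa [show H 1 a - (q1 - q2 * a + q3 * a^2 / 2) = H 1 a + (q2 * a - q3/2 * a^2) - q1 by ring]
  obtain ⟨q0, h0⟩ := tt_tail (D := fun a => H 0 a + (q1 * a - q2/2 * a^2 + q3/6 * a^3)) (D' := fun a => -H 1 a + (q1 * 1 - q2/2 * (2 * a) + q3/6 * (3 * a^2))) (t0 := 0) (K := C) (c := 3) (by norm_num)
    (fun t _ => (h.d0 t).fun_add ((((hasDerivAt_id t).const_mul q1).fun_sub (((hasDerivAt_pow 2 t).const_mul (q2/2)).congr_deriv (by norm_num))).fun_add (((hasDerivAt_pow 3 t).const_mul (q3/6)).congr_deriv (by norm_num)))) (by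
    intro t ht
    rw [← abs_neg]
    have := h1' t ht
    ring_nf at this ⊢
    exact this)
  have h0' : ∀ a ≤ 0, |H 0 a - (q0 - q1 * a + q2 * a^2 / 2 - q3 * a^3 / 6)| ≤ C * exp (3 * a) := fun a ha => by
    have := (h0 a ha).trans (le3 _ _ (E a) hC0)
    rwa [show H 0 a - (q0 - q1 * a + q2 * a^2 / 2 - q3 * a^3 / 6) = H 0 a + (q1 * a - q2/2 * a^2 + q3/6 * a^3) - q0 by ring]
  exact ⟨q0, q1, q2, q3, C, hC0, h0', h1', h2', h3'⟩

end p5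

section p6
open MeasureTheory

lemma tt_step {u v : ℝ → ℝ} {z C : ℝ} (hd : ∀ a, HasDerivAt u (z * u a - v a) a)
    (hu : ∀ a, 0 ≤ u a) (hv : ∀ a, 0 ≤ v a) (hvc : Continuous v)
    (hi : Integrable (fun a => z * u a)) (hC : ∀ a ≤ 0, u a ≤ C) : Integrable v := by
  have huc : Continuous u := continuous_iff_continuousAt.mpr fun a => (hd a).continuousAt
  apply integrable_of_intervalIntegral_norm_bounded (l := (atTop : Filter ℝ)) (a := fun T => -T) (b := fun T => T)
    (C + ∫ a, ‖z * u a‖)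
  · intro T
    exact (hvc.continuousOn.integrableOn_Icc).mono_set Set.Ioc_subset_Icc_self
  · exact tendsto_neg_atTop_atBot
  · exact tendsto_id
  · filter_upwards [eventually_ge_atTop 0] with T hT
    have h1 : ∫ a in (-T)..T, (z * u a - v a) = u T - u (-T) :=
      intervalIntegral.integral_eq_sub_of_hasDerivAt (fun a _ => hd a)
        ((by fun_prop : Continuous fun a => z * u a - v a).intervalIntegrable _ _)
    rw [intervalIntegral.integral_sub ((huc.const_mul z).intervalIntegrable _ _) (hvc.intervalIntegrable _ _)] at h1
    have h2 : ∫ a in (-T)..T, ‖v a‖ = ∫ a in (-T)..T, v a := by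
      congr 1; ext a; rw [norm_of_nonneg (hv a)]
    have h3 : ∫ a in (-T)..T, z * u a ≤ ∫ a, ‖z * u a‖ := by
      rw [intervalIntegral.integral_of_le (by linarith)]
      calc _ ≤ ∫ a in Set.Ioc (-T) T, ‖z * u a‖ :=
            setIntegral_mono hi.integrableOn hi.norm.integrableOn (fun a => le_norm_self _)
        _ ≤ _ := setIntegral_le_integral hi.norm (Eventually.of_forall fun _ => norm_nonneg _)
    rw [h2]
    have := hC (-T) (by linarith)
    have := hu T
    linarith

lemma tt_step_eq {u v : ℝ → ℝ} {z C : ℝ} (hd : ∀ a, HasDerivAt u (z * u a - v a) a)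
    (hu : ∀ a, 0 ≤ u a) (hv : ∀ a, 0 ≤ v a) (hvc : Continuous v)
    (hi : Integrable u) (hC : ∀ a ≤ 0, u a ≤ C) : Integrable v ∧ ∫ a, v a = z * ∫ a, u a := by
  have iv := tt_step hd hu hv hvc (hi.const_mul z) hC
  refine ⟨iv, ?_⟩
  have := integral_eq_zero_of_hasDerivAt_of_integrable hd ((hi.const_mul z).sub iv) hi
  rw [integral_sub (hi.const_mul z) iv, integral_const_mul] at this
  linarith

lemma tt_chain_cont {H : Fin 4 → ℝ → ℝ} (h : TTChain H) (i : Fin 4) : Continuous (H i) := by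
  refine continuous_iff_continuousAt.mpr fun a => ?_
  fin_cases i
  · exact (h.d0 a).continuousAt
  · exact (h.d1 a).continuousAt
  · exact (h.d2 a).continuousAt
  · exact (h.d3 a).continuousAt

lemma tt_chain_bd {H : Fin 4 → ℝ → ℝ} (h : TTChain H) {z : ℝ} (hz : 0 < z) :
    ∃ C, ∀ i, ∀ a ≤ 0, exp (z * a) * H i a ≤ C := by
  obtain ⟨C, hC0, hC⟩ := tt_chain_growth h (lt_min hz one_pos) (min_le_right z 1)
  refine ⟨C, fun i a ha => ?_⟩
  calc exp (z * a) * H i a ≤ exp (z * a) * (C * exp (-(min z 1 * a))) := by gcongr; exact hC i a ha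
    _ = C * exp ((z - min z 1) * a) := by
      rw [mul_left_comm, ← exp_add]; congr 2; ring
    _ ≤ C * 1 := by
      gcongr
      rw [exp_le_one_iff]
      exact mul_nonpos_of_nonneg_of_nonpos (by linarith [min_le_left z 1]) ha
    _ = C := mul_one C

lemma tt_mell_step {H : Fin 4 → ℝ → ℝ} (h : TTChain H) {z : ℝ} (hz : 0 < z)
    (hi : Integrable (fun a => exp (z * a) * H 0 a)) :
    Integrable (fun a => exp ((z+4) * a) * H 0 a) ∧
      ∫ a, exp ((z+4) * a) * H 0 a = z^4 * ∫ a, exp (z * a) * H 0 a := by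
  obtain ⟨C, hC⟩ := tt_chain_bd h hz
  have dE : ∀ a, HasDerivAt (fun a => exp (z * a)) (exp (z * a) * z) a := fun a =>
    (((hasDerivAt_id a).const_mul z).exp).congr_deriv (by simp)
  have c := tt_chain_cont h
  have c0 := c 0
  have c1 := c 1
  have c2 := c 2
  have c3 := c 3
  have nn : ∀ i a, 0 ≤ exp (z * a) * H i a := fun i a => mul_nonneg (exp_pos _).le (h.nn i a)
  obtain ⟨i1, j1⟩ := tt_step_eq (u := fun a => exp (z * a) * H 0 a) (v := fun a => exp (z * a) * H 1 a) (z := z)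
    (fun a => ((dE a).fun_mul (h.d0 a)).congr_deriv (by ring)) (nn 0) (nn 1) (by fun_prop) hi (hC 0)
  obtain ⟨i2, j2⟩ := tt_step_eq (u := fun a => exp (z * a) * H 1 a) (v := fun a => exp (z * a) * H 2 a) (z := z)
    (fun a => ((dE a).fun_mul (h.d1 a)).congr_deriv (by ring)) (nn 1) (nn 2) (by fun_prop) i1 (hC 1)
  obtain ⟨i3, j3⟩ := tt_step_eq (u := fun a => exp (z * a) * H 2 a) (v := fun a => exp (z * a) * H 3 a) (z := z)
    (fun a => ((dE a).fun_mul (h.d2 a)).congr_deriv (by ring)) (nn 2) (nn 3) (by fun_prop) i2 (hC 2)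
  obtain ⟨i4, j4⟩ := tt_step_eq (u := fun a => exp (z * a) * H 3 a) (v := fun a => exp ((z + 4) * a) * H 0 a) (z := z)
    (fun a => ((dE a).fun_mul (h.d3 a)).congr_deriv (by rw [add_mul, exp_add]; ring)) (nn 3)
    (fun a => mul_nonneg (exp_pos _).le (h.nn 0 a)) (by fun_prop) i3 (hC 3)
  refine ⟨i4, ?_⟩
  rw [j4, j3, j2, j1]; ring

lemma tt_mell_int {H : Fin 4 → ℝ → ℝ} (h : TTChain H) {q0 q1 q2 q3 C : ℝ} (hq : TTPoly H q0 q1 q2 q3 C) (z : ℝ) (hz : 0 < z) :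
    Integrable (fun a => exp (z * a) * H 0 a) := by
  have c0 := tt_chain_cont h 0
  have base4 : Integrable (fun a => exp (4 * a) * H 0 a) := by
    apply tt_step (u := H 3) (z := 0) (C := q3 + C) (fun a => (h.d3 a).congr_deriv (by ring)) (h.nn 3)
      (fun a => mul_nonneg (exp_pos _).le (h.nn 0 a)) (by fun_prop) (by simp)
    intro a ha
    have := (abs_le.mp (hq.p3 a ha)).2
    have h1 : exp (3 * a) ≤ 1 := by rw [exp_le_one_iff]; linarith
    have := mul_le_mul_of_nonneg_left h1 hq.nn
    linarith
  have base : ∀ z, 0 < z → z ≤ 4 → Integrable (fun a => exp (z * a) * H 0 a) := by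
    intro z hz hz4
    obtain ⟨C, hC⟩ := tt_chain_bd h (half_pos hz)
    have i1 : IntegrableOn (fun a => exp (z * a) * H 0 a) (Set.Iic 0) := by
      have : IntegrableOn (fun a => C * exp (z/2 * a)) (Set.Iic 0) :=
        (integrableOn_exp_mul_Iic (half_pos hz) 0).const_mul C
      refine Integrable.mono' this (by fun_prop : Continuous fun a => exp (z * a) * H 0 a).aestronglyMeasurable ?_
      rw [ae_restrict_iff' measurableSet_Iic]
      filter_upwards with a ha
      rw [norm_of_nonneg (mul_nonneg (exp_pos _).le (h.nn 0 a))]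
      have e : exp (z * a) = exp (z/2 * a) * exp (z/2 * a) := by rw [← exp_add]; ring_nf
      have := mul_le_mul_of_nonneg_right (hC 0 a ha) (exp_pos (z/2*a)).le
      rw [e]; linarith
    have i2 : IntegrableOn (fun a => exp (z * a) * H 0 a) (Set.Ioi 0) := by
      refine Integrable.mono' base4.integrableOn (by fun_prop : Continuous fun a => exp (z * a) * H 0 a).aestronglyMeasurable ?_
      rw [ae_restrict_iff' measurableSet_Ioi]
      filter_upwards with a ha
      rw [Set.mem_Ioi] at ha
      rw [norm_of_nonneg (mul_nonneg (exp_pos _).le (h.nn 0 a))]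
      have := h.nn 0 a
      gcongr
    have := i1.union i2
    rwa [Set.Iic_union_Ioi, integrableOn_univ] at this
  have ind : ∀ n : ℕ, ∀ z : ℝ, 0 < z → z ≤ 4 * ((n:ℝ)+1) → Integrable (fun a => exp (z * a) * H 0 a) := by
    intro n
    induction n with
    | zero => intro z h1 h2; exact base z h1 (by simpa using h2)
    | succ n ih =>
      intro z h1 h2
      rcases le_or_gt z 4 with h3 | h3
      · exact base z h1 h3
      · have := (tt_mell_step h (z := z - 4) (by linarith) (ih (z-4) (by linarith) (by push_cast at h2; linarith))).1
        simpa using this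
  obtain ⟨n, hn⟩ := exists_nat_ge z
  exact ind n z hz (by linarith)

lemma tt_mell_pos {H : Fin 4 → ℝ → ℝ} (h : TTChain H) (hne : ∃ a, 0 < H 0 a) {z : ℝ}
    (hi : Integrable (fun a => exp (z * a) * H 0 a)) : 0 < ∫ a, exp (z * a) * H 0 a := by
  have c0 := tt_chain_cont h 0
  rw [integral_pos_iff_support_of_nonneg (fun a => mul_nonneg (exp_pos _).le (h.nn 0 a)) hi]
  apply IsOpen.measure_pos
  · exact (by fun_prop : Continuous fun a => exp (z * a) * H 0 a).isOpen_support
  · obtain ⟨a, ha⟩ := hne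
    exact ⟨a, by rw [Function.mem_support]; positivity⟩

lemma tt_chain_ne {H : Fin 4 → ℝ → ℝ} (h : TTChain H) (hne : 0 < ∑ i, H i 0) : ∃ a, 0 < H 0 a := by
  by_contra hcon
  push Not at hcon
  have z0 : H 0 = fun _ => 0 := by ext a; exact le_antisymm (hcon a) (h.nn 0 a)
  have z1 : H 1 = fun _ => 0 := by
    ext a; have := h.d0 a; rw [z0] at this; have := this.unique (hasDerivAt_const a 0); linarith
  have z2 : H 2 = fun _ => 0 := by
    ext a; have := h.d1 a; rw [z1] at this; have := this.unique (hasDerivAt_const a 0); linarith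
  have z3 : H 3 = fun _ => 0 := by
    ext a; have := h.d2 a; rw [z2] at this; have := this.unique (hasDerivAt_const a 0); linarith
  rw [Fin.sum_univ_four, z0, z1, z2, z3] at hne
  simp at hne

theorem tt_mell_gamma {H : Fin 4 → ℝ → ℝ} (h : TTChain H) (hne : ∃ a, 0 < H 0 a)
    {q0 q1 q2 q3 C : ℝ} (hq : TTPoly H q0 q1 q2 q3 C) {z : ℝ} (hz : 0 < z) :
    z^4 * ∫ a, exp (z * a) * H 0 a =
      (∫ a, exp (4 * a) * H 0 a) * (exp (z * log 4) * Gamma (1 + z/4)^4) := by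
  let m : ℝ → ℝ := fun z => ∫ a, exp (z * a) * H 0 a
  have hi := tt_mell_int h hq
  have mpos : ∀ z, 0 < z → 0 < m z := fun z hz => tt_mell_pos h hne (hi z hz)
  have mfe : ∀ z, 0 < z → m (z+4) = z^4 * m z := fun z hz => (tt_mell_step h hz (hi z hz)).2
  have mconv : ConvexOn ℝ (Set.Ioi 0) (fun z => log (m z)) := by
    refine ⟨convex_Ioi 0, ?_⟩
    intro s hs t ht a b ha hb hab
    simp only [smul_eq_mul]
    rw [Set.mem_Ioi] at hs ht
    have hst : 0 < a * s + b * t := by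
      rcases ha.eq_or_lt with h1 | h1
      · subst h1; simp at hab; subst hab; simpa using ht
      · have := mul_pos h1 hs; have := mul_nonneg hb ht.le; linarith
    rw [← exp_le_exp, exp_log (mpos _ hst)]
    set k := a * log (m s) + b * log (m t)
    have pt : ∀ x, exp (-k) * (exp ((a*s+b*t) * x) * H 0 x) ≤ a / m s * (exp (s * x) * H 0 x) + b / m t * (exp (t * x) * H 0 x) := by
      intro x
      have := convexOn_exp.2 (Set.mem_univ (s * x - log (m s))) (Set.mem_univ (t * x - log (m t))) ha hb hab
      simp only [smul_eq_mul] at this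
      rw [exp_sub, exp_sub, exp_log (mpos s hs), exp_log (mpos t ht)] at this
      have e : exp (a * (s * x - log (m s)) + b * (t * x - log (m t))) = exp (-k) * exp ((a*s+b*t)*x) := by
        rw [← exp_add]; congr 1; simp only [k]; ring
      rw [e] at this
      have := mul_le_mul_of_nonneg_right this (h.nn 0 x)
      calc _ = exp (-k) * exp ((a*s+b*t)*x) * H 0 x := by ring
        _ ≤ _ := this
        _ = _ := by ring
    have := integral_mono ((hi _ hst).const_mul _) (((hi s hs).const_mul (a / m s)).add ((hi t ht).const_mul (b / m t))) pt
    simp only [Pi.add_apply] at this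
    rw [integral_add ((hi s hs).const_mul (a / m s)) ((hi t ht).const_mul (b / m t)),
      integral_const_mul, integral_const_mul, integral_const_mul] at this
    change exp (-k) * m (a*s+b*t) ≤ a / m s * m s + b / m t * m t at this
    rw [div_mul_cancel₀ _ (mpos s hs).ne', div_mul_cancel₀ _ (mpos t ht).ne', hab, exp_neg, inv_mul_le_iff₀ (exp_pos _), mul_one] at this
    exact this
  let g : ℝ → ℝ := fun x => exp ((log (m (4 * x)) - log (m 4)) / 4 - (x - 1) * log 4)
  have hg := eq_Gamma_of_log_convex (f := g) (by
      have e : log ∘ g = fun x => (log (m (4 * x)) - log (m 4)) / 4 - (x - 1) * log 4 := by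
        ext x; simp [g]
      rw [e]
      refine ⟨convex_Ioi 0, ?_⟩
      intro s hs t ht a b ha hb hab
      have := mconv.2 (show 4 * s ∈ Set.Ioi 0 by simpa using hs) (show 4 * t ∈ Set.Ioi 0 by simpa using ht) ha hb hab
      simp only [smul_eq_mul] at this ⊢
      have e2 : 4 * (a * s + b * t) = a * (4 * s) + b * (4 * t) := by ring
      rw [e2]
      have hb' : b = 1 - a := by linarith
      subst hb'
      linarith)
    (by
      intro y hy
      simp only [g]
      have e1 : 4 * (y + 1) = 4 * y + 4 := by ring
      rw [e1, mfe (4*y) (by linarith), log_mul (by positivity) (mpos _ (by linarith)).ne', log_pow, log_mul (by norm_num) hy.ne']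
      nth_rw 4 [← exp_log hy]
      rw [← exp_add]
      congr 1
      push_cast
      ring)
    (fun {y} _ => exp_pos _) (by simp [g])
  have key := hg (show 1 + z/4 ∈ Set.Ioi (0:ℝ) by rw [Set.mem_Ioi]; positivity)
  change z^4 * m z = m 4 * (exp (z * log 4) * Gamma (1+z/4)^4)
  rw [← mfe z hz, ← key]
  simp only [g]
  rw [← exp_nat_mul, ← exp_add]
  have e3 : ∀ x, m 4 * exp x = exp (log (m 4) + x) := fun x => by
    rw [exp_add, exp_log (mpos 4 (by norm_num))]
  have e4 : m (z+4) = exp (log (m (z+4))) := (exp_log (mpos _ (by linarith))).symm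
  rw [e3, e4]
  congr 1
  have : 4 * (1 + z/4) = z + 4 := by ring
  rw [this]
  push_cast
  ring

end p6

noncomputable section p7s

lemma tt_log_gamma_exp : ∃ A B : ℝ, 0 ≤ B ∧ ∀ x : ℝ, 0 < x → x ≤ 1/2 →
    |log (Gamma (1 + x)) - (-(eulerMascheroniConstant * x) + A * x^2 - (∑' n : ℕ, 1 / ((n : ℝ) + 1)^3)/3 * x^3)| ≤ B * x^4 := by
  have hsum : ∀ k : ℕ, 2 ≤ k → Summable (fun n : ℕ => 1 / ((n : ℝ) + 1)^k) := by
    intro k hk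
    have := (summable_nat_add_iff 1).mpr (Real.summable_one_div_nat_pow.mpr (show 1 < k by omega))
    simpa using this
  refine ⟨(∑' n : ℕ, 1 / ((n : ℝ) + 1)^2)/2, 2 * ∑' n : ℕ, 1 / ((n : ℝ) + 1)^4,
    mul_nonneg (by norm_num) (tsum_nonneg fun n => by positivity), ?_⟩
  intro x hx hx2
  have t2 := (hsum 2 (by norm_num)).hasSum.tendsto_sum_nat
  have t3 := (hsum 3 (by norm_num)).hasSum.tendsto_sum_nat
  have t4 := (hsum 4 (by norm_num)).hasSum.tendsto_sum_nat
  have tg := Real.tendsto_harmonic_sub_log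
  have tG := (Real.BohrMollerup.tendsto_log_gamma hx).add_const (log x)
  have eG : log (Gamma x) + log x = log (Gamma (1+x)) := by
    rw [add_comm 1 x, Gamma_add_one hx.ne', log_mul hx.ne' (Gamma_pos_of_pos hx).ne']; ring
  rw [eG] at tG
  have tt := (tG.sub (((tg.mul_const x).neg.add ((t2.div_const 2).mul_const (x^2))).sub ((t3.div_const 3).mul_const (x^3)))).abs
  have t4' := (t4.const_mul 2).mul_const (x^4)
  refine le_of_tendsto_of_tendsto' tt t4' ?_
  intro n
  have e1 : Real.BohrMollerup.logGammaSeq x n + log x = x * log n - ∑ m ∈ Finset.range n, log (1 + x / ((m:ℝ)+1)) := by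
    rw [Real.BohrMollerup.logGammaSeq, Finset.sum_range_succ']
    have : log (n.factorial : ℝ) = ∑ m ∈ Finset.range n, log ((m:ℝ)+1) := by
      rw [← Finset.prod_range_add_one_eq_factorial]
      push_cast
      rw [log_prod (fun m _ => by positivity)]
    rw [this]
    have : ∑ m ∈ Finset.range n, log (1 + x / ((m:ℝ)+1)) = ∑ m ∈ Finset.range n, log (x + ((m+1:ℕ):ℝ)) - ∑ m ∈ Finset.range n, log ((m:ℝ)+1) := by
      rw [← Finset.sum_sub_distrib]
      refine Finset.sum_congr rfl fun m _ => ?_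
      rw [← log_div (by positivity) (by positivity)]
      congr 1
      push_cast
      field_simp
      ring
    rw [this]
    simp
    ring
  have e2 : (harmonic n : ℝ) = ∑ m ∈ Finset.range n, 1 / ((m:ℝ)+1) := by
    rw [harmonic]; push_cast; simp
  have e3 : Real.BohrMollerup.logGammaSeq x n + log x - (-((↑(harmonic n) - log n) * x) + (∑ m ∈ Finset.range n, 1 / ((m:ℝ)+1)^2) / 2 * x^2 - (∑ m ∈ Finset.range n, 1 / ((m:ℝ)+1)^3) / 3 * x^3) =
     - ∑ m ∈ Finset.range n, (log (1 + x / ((m:ℝ)+1)) - x/((m:ℝ)+1) + (x/((m:ℝ)+1))^2/2 - (x/((m:ℝ)+1))^3/3) := by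
    rw [e1, e2]
    simp only [Finset.sum_add_distrib, Finset.sum_sub_distrib, div_pow, ]
    have f : ∀ k : ℕ, ∑ m ∈ Finset.range n, x^k / ((m:ℝ)+1)^k = (∑ m ∈ Finset.range n, 1 / ((m:ℝ)+1)^k) * x^k := by
      intro k; rw [Finset.sum_mul]; refine Finset.sum_congr rfl fun m _ => by ring
    have f1 := f 1
    simp only [pow_one] at f1
    rw [← Finset.sum_div, ← Finset.sum_div, f, f, f1]
    ring
  rw [e3, abs_neg]
  refine (Finset.abs_sum_le_sum_abs _ _).trans ?_
  rw [mul_assoc, Finset.sum_mul, Finset.mul_sum]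
  refine Finset.sum_le_sum fun m _ => ?_
  set y := x / ((m:ℝ)+1) with hy
  have y0 : 0 < y := by positivity
  have y1 : y ≤ 1/2 := by
    refine (div_le_self hx.le ?_).trans hx2
    have : (0:ℝ) ≤ m := by positivity
    linarith
  have := Real.abs_log_sub_add_sum_range_le (x := -y) (by rw [abs_neg, abs_of_pos y0]; linarith) 3
  rw [abs_neg, abs_of_pos y0] at this
  have h1 : y^(3+1) / (1 - y) ≤ 2 * y^4 := by
    rw [div_le_iff₀ (by linarith)]
    have h2 : 0 ≤ y^4 * (1/2 - y) := mul_nonneg (by positivity) (by linarith)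
    have h3 : y^(3+1) = y^4 := by norm_num
    rw [h3]; linarith
  have e : 2 * (1 / ((m:ℝ)+1)^4 * x^4) = 2 * y^4 := by rw [hy, div_pow]; ring
  rw [e]
  refine le_trans (le_of_eq ?_) (this.trans h1)
  congr 1
  simp [Finset.sum_range_succ]
  ring


open Asymptotics MeasureTheory Topology

lemma tt_coef {c : ℝ} {g : ℝ → ℝ} (hg : Continuous g) {k : ℕ}
    (h : (fun z => c + z * g z) =O[𝓝[>] 0] (fun z : ℝ => z^(k+1))) :
    c = 0 ∧ g =O[𝓝[>] 0] (fun z : ℝ => z^k) := by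
  have c0 : c = 0 := by
    have t1 : Tendsto (fun z => c + z * g z) (𝓝[>] 0) (𝓝 c) := by
      have : Continuous (fun z => c + z * g z) := by fun_prop
      simpa using this.continuousAt.tendsto.mono_left (nhdsWithin_le_nhds (a := (0:ℝ)) (s := Set.Ioi 0))
    have t2 : Tendsto (fun z : ℝ => z^(k+1)) (𝓝[>] 0) (𝓝 0) := by
      have : Continuous (fun z : ℝ => z^(k+1)) := by fun_prop
      simpa using this.continuousAt.tendsto.mono_left (nhdsWithin_le_nhds (a := (0:ℝ)) (s := Set.Ioi 0))
    exact tendsto_nhds_unique t1 (h.trans_tendsto t2)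
  refine ⟨c0, ?_⟩
  subst c0
  obtain ⟨K, hK⟩ := h.bound
  refine IsBigO.of_bound K ?_
  filter_upwards [hK, self_mem_nhdsWithin] with z hz hz0
  rw [Set.mem_Ioi] at hz0
  simp only [zero_add, norm_mul, pow_succ] at hz
  rw [← mul_assoc, mul_comm] at hz
  exact le_of_mul_le_mul_right hz (norm_pos_iff.mpr hz0.ne')

lemma tt_exp_taylor : (fun x => exp x - (1 + x + x^2/2 + x^3/6)) =O[𝓝 0] (fun x : ℝ => x^4) := by
  refine IsBigO.of_bound (5/96) ?_
  have : ∀ᶠ x : ℝ in 𝓝 0, |x| < 1 := by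
    have : Continuous (fun x : ℝ => |x|) := continuous_abs
    exact this.continuousAt.eventually (gt_mem_nhds (by simp))
  filter_upwards [this] with x hx
  have := Real.exp_bound hx.le (n := 4) (by norm_num)
  simp [Finset.sum_range_succ, Nat.factorial] at this
  rw [norm_eq_abs, norm_eq_abs, abs_pow]
  norm_num at this
  linarith

lemma tt_cont_O1 {g : ℝ → ℝ} (hg : Continuous g) : g =O[𝓝[>] 0] (fun _ => (1:ℝ)) :=
  (hg.continuousAt.tendsto.isBigO_one ℝ).mono nhdsWithin_le_nhds

lemma tt_exp_match {p c2 c3 B m q0 q1 q2 q3 K : ℝ} {E M : ℝ → ℝ}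
    (hE : ∀ z, 0 < z → z ≤ 1 → |E z - (p*z + c2*z^2 + c3*z^3)| ≤ B*z^4)
    (hM : ∀ z, 0 < z → z ≤ 1 → |M z - (q3 + q2*z + q1*z^2 + q0*z^3)| ≤ K*z^4)
    (h : ∀ z, 0 < z → M z = m * exp (E z)) :
    q3 = m ∧ q2 = m * p ∧ q1 = m * (p^2/2 + c2) ∧ q0 = m * (p^3/6 + p*c2 + c3) := by
  have l1 : ∀ᶠ z : ℝ in 𝓝[>] 0, 0 < z ∧ z ≤ 1 := Ioc_mem_nhdsGT one_pos
  have hE' : (fun z => E z - (p*z + c2*z^2 + c3*z^3)) =O[𝓝[>] 0] (fun z : ℝ => z^4) := by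
    refine IsBigO.of_bound B ?_
    filter_upwards [l1] with z hz
    rw [norm_eq_abs, norm_of_nonneg (by have := hz.1; positivity)]; exact hE z hz.1 hz.2
  have hM' : (fun z => M z - (q3 + q2*z + q1*z^2 + q0*z^3)) =O[𝓝[>] 0] (fun z : ℝ => z^4) := by
    refine IsBigO.of_bound K ?_
    filter_upwards [l1] with z hz
    rw [norm_eq_abs, norm_of_nonneg (by have := hz.1; positivity)]; exact hM z hz.1 hz.2
  have t4 : Tendsto (fun z : ℝ => z^4) (𝓝[>] 0) (𝓝 0) := by
    have : Continuous (fun z : ℝ => z^4) := by fun_prop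
    simpa using this.continuousAt.tendsto.mono_left (nhdsWithin_le_nhds (a := (0:ℝ)) (s := Set.Ioi 0))
  let e : ℝ → ℝ := fun z => p*z + c2*z^2 + c3*z^3
  have ce : Continuous e := by simp only [e]; fun_prop
  have te : Tendsto e (𝓝[>] 0) (𝓝 0) := by
    have := ce.continuousAt.tendsto.mono_left (nhdsWithin_le_nhds (a := (0:ℝ)) (s := Set.Ioi 0))
    simpa [e] using this
  have s1 : (fun z => exp (E z) - exp (e z)) =O[𝓝[>] 0] (fun z : ℝ => z^4) := by
    have a1 := ((hasDerivAt_exp 0).isBigO_sub).comp_tendsto (hE'.trans_tendsto t4)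
    simp only [Function.comp_def, sub_zero, exp_zero] at a1
    have a2 := (tt_cont_O1 (continuous_exp.comp ce)).mul (a1.trans hE')
    simp only [one_mul, Function.comp_def] at a2
    refine a2.congr_left fun z => ?_
    rw [mul_sub, ← exp_add]
    simp [e]
  have s2 : (fun z => exp (e z) - (1 + e z + (e z)^2/2 + (e z)^3/6)) =O[𝓝[>] 0] (fun z : ℝ => z^4) := by
    refine (tt_exp_taylor.comp_tendsto te).trans ?_
    have := (tt_cont_O1 (g := fun z => (p + c2*z+c3*z^2)^4) (by fun_prop)).mul (isBigO_refl (fun z : ℝ => z^4) (𝓝[>] 0))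
    simp only [one_mul] at this
    refine this.congr_left fun z => ?_
    simp [e]; ring
  have s3 : (fun z => (1 + e z + (e z)^2/2 + (e z)^3/6) - (1 + p*z+(p^2/2+c2)*z^2+(p^3/6+p*c2+c3)*z^3)) =O[𝓝[>] 0] (fun z : ℝ => z^4) := by
    have := (tt_cont_O1 (g := fun z => (p*c3 + c2^2/2 + c2*c3*z + c3^2*z^2/2) + (p^2*c2/2 + p*c2^2/2*z + c2^3/6*z^2 + (p^2*c3/2*z + c2^2*c3/2*z^3+p*c3^2/2*z^3+c2*c3^2/2*z^4+c3^3/6*z^5 + p*c2*c3*z^2))) (by fun_prop)).mul (isBigO_refl (fun z : ℝ => z^4) (𝓝[>] 0))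
    simp only [one_mul] at this
    refine this.congr_left fun z => ?_
    simp [e]; ring
  have s4 := (((s1.add s2).add s3).const_mul_left m).sub hM'
  have s5 : (fun z => (q3 - m) + z * ((q2 - m*p) + z * ((q1 - m*(p^2/2+c2)) + z * ((q0 - m*(p^3/6+p*c2+c3)) + z * 0)))) =O[𝓝[>] 0] (fun z : ℝ => z^4) := by
    refine s4.congr' ?_ (EventuallyEq.refl _ _)
    filter_upwards [l1] with z hz
    rw [h z hz.1]; ring
  obtain ⟨r3, s6⟩ := tt_coef (by fun_prop) s5
  obtain ⟨r2, s7⟩ := tt_coef (by fun_prop) s6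
  obtain ⟨r1, s8⟩ := tt_coef (by fun_prop) s7
  obtain ⟨r0, s9⟩ := tt_coef (by fun_prop) s8
  refine ⟨by linarith, by linarith, by linarith, by linarith⟩

lemma tt_pow_exp (k : ℕ) {z : ℝ} (hz : 0 < z) : Tendsto (fun a => exp (z * a) * a^k) atBot (𝓝 0) := by
  have h1 := (isLittleO_pow_exp_pos_mul_atTop (k := k) hz).tendsto_div_nhds_zero.comp tendsto_neg_atBot_atTop
  have h2 := h1.const_mul ((-1:ℝ)^k)
  rw [mul_zero] at h2
  refine h2.congr fun a => ?_
  simp only [Function.comp_def]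
  rw [neg_pow a k, mul_neg, exp_neg, div_inv_eq_mul, ← mul_assoc, ← mul_assoc, ← mul_pow]
  simp; ring

lemma tt_mell_exp {H : Fin 4 → ℝ → ℝ} (h : TTChain H)
    {q0 q1 q2 q3 C : ℝ} (hq : TTPoly H q0 q1 q2 q3 C) : ∃ K, ∀ z, 0 < z → z ≤ 1 →
    |z^4 * (∫ a, exp (z * a) * H 0 a) - (q3 + q2*z + q1*z^2 + q0*z^3)| ≤ K * z^4 := by
  have c0 := tt_chain_cont h 0
  have hi := tt_mell_int h hq
  refine ⟨(∫ a in Set.Iic 0, C * exp (3 * a)) + ∫ a in Set.Ioi 0, exp (1 * a) * H 0 a, ?_⟩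
  intro z hz hz1
  let f : ℝ → ℝ := fun a => q0 - q1*a + q2*a^2/2 - q3*a^3/6
  have cf : Continuous f := by simp only [f]; fun_prop
  have i3 : IntegrableOn (fun a => C * exp (3 * a)) (Set.Iic 0) :=
    (integrableOn_exp_mul_Iic (by norm_num) 0).const_mul C
  have bR : ∀ a ∈ Set.Iic (0:ℝ), ‖exp (z * a) * (H 0 a - f a)‖ ≤ C * exp (3 * a) := by
    intro a ha
    rw [norm_mul, norm_of_nonneg (exp_pos _).le, norm_eq_abs]
    have h1 := hq.p0 a ha
    have h2 : exp (z * a) ≤ 1 := by rw [exp_le_one_iff]; exact mul_nonpos_of_nonneg_of_nonpos hz.le ha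
    calc _ ≤ 1 * |H 0 a - f a| := by gcongr
      _ ≤ _ := by rw [one_mul]; exact h1
  have iR : IntegrableOn (fun a => exp (z * a) * (H 0 a - f a)) (Set.Iic 0) := by
    refine Integrable.mono' i3 (by fun_prop : Continuous fun a => exp (z * a) * (H 0 a - f a)).aestronglyMeasurable ?_
    rw [ae_restrict_iff' measurableSet_Iic]
    filter_upwards with a ha using bR a ha
  have iF : IntegrableOn (fun a => exp (z * a) * f a) (Set.Iic 0) := by
    refine ((hi z hz).integrableOn.sub iR).congr ?_
    filter_upwards with a
    simp only [Pi.sub_apply]; ring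
  let F : ℝ → ℝ := fun a => exp (z * a) * (f a / z + (q1 - q2*a + q3*a^2/2)/z^2 + (q2 - q3*a)/z^3 + q3/z^4)
  have hF : ∀ a, HasDerivAt F (exp (z * a) * f a) a := by
    intro a
    have d1 : HasDerivAt (fun a => exp (z * a)) (exp (z * a) * z) a := by
      simpa using ((hasDerivAt_id a).const_mul z).exp
    have d2 : HasDerivAt (fun a => f a / z + (q1 - q2*a + q3*a^2/2)/z^2 + (q2 - q3*a)/z^3 + q3/z^4)
        ((-q1 + q2*a - q3*a^2/2)/z + (-q2 + q3*a)/z^2 + (-q3)/z^3) a := by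
      have x1 := hasDerivAt_id a
      have x2 := hasDerivAt_pow 2 a
      have x3 := hasDerivAt_pow 3 a
      have := ((((((x1.const_mul q1).const_sub q0).add ((x2.const_mul q2).div_const 2)).sub ((x3.const_mul q3).div_const 6)).div_const z).add
        ((((x1.const_mul q2).const_sub q1).add ((x2.const_mul q3).div_const 2)).div_const (z^2))).add
        (((x1.const_mul q3).const_sub q2).div_const (z^3)) |>.add_const (q3/z^4)
      refine this.congr_deriv ?_
      norm_num
      ring
    refine (d1.mul d2).congr_deriv ?_
    simp only [f]
    field_simp
    ring
  have tF : Tendsto F atBot (𝓝 0) := by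
    have t0 := (tt_pow_exp 0 hz).const_mul (q0/z+q1/z^2+q2/z^3+q3/z^4)
    have t1 := (tt_pow_exp 1 hz).const_mul (-q1/z-q2/z^2-q3/z^3)
    have t2 := (tt_pow_exp 2 hz).const_mul (q2/2/z+q3/2/z^2)
    have t3 := (tt_pow_exp 3 hz).const_mul (-q3/6/z)
    have := ((t0.add t1).add t2).add t3
    simp only [mul_zero, add_zero] at this
    refine this.congr fun a => ?_
    simp only [F, f]; ring
  have I1 : ∫ a in Set.Iic 0, exp (z * a) * f a = q0/z + q1/z^2 + q2/z^3 + q3/z^4 := by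
    rw [integral_Iic_of_hasDerivAt_of_tendsto' (fun a _ => hF a) iF tF]
    simp [F, f]
  have I2 : |∫ a in Set.Iic 0, exp (z * a) * (H 0 a - f a)| ≤ ∫ a in Set.Iic 0, C * exp (3 * a) := by
    rw [← norm_eq_abs]
    refine norm_integral_le_of_norm_le i3 ?_
    rw [ae_restrict_iff' measurableSet_Iic]
    filter_upwards with a ha using bR a ha
  have I3 : ∫ a in Set.Ioi 0, exp (z * a) * H 0 a ≤ ∫ a in Set.Ioi 0, exp (1 * a) * H 0 a := by
    refine setIntegral_mono_on (hi z hz).integrableOn (hi 1 one_pos).integrableOn measurableSet_Ioi ?_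
    intro a ha
    rw [Set.mem_Ioi] at ha
    have := h.nn 0 a
    gcongr
  have I4 : 0 ≤ ∫ a in Set.Ioi 0, exp (z * a) * H 0 a :=
    setIntegral_nonneg measurableSet_Ioi fun a _ => mul_nonneg (exp_pos _).le (h.nn 0 a)
  have I5 : ∫ a, exp (z * a) * H 0 a = (∫ a in Set.Iic 0, exp (z * a) * f a) + (∫ a in Set.Iic 0, exp (z * a) * (H 0 a - f a)) + ∫ a in Set.Ioi 0, exp (z * a) * H 0 a := by
    rw [← integral_add iF iR, ← intervalIntegral.integral_Iic_add_Ioi (hi z hz).integrableOn (hi z hz).integrableOn (b := 0)]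
    congr 2
    ext a; ring
  rw [I5, I1]
  set r := ∫ a in Set.Iic 0, exp (z * a) * (H 0 a - f a)
  set t := ∫ a in Set.Ioi 0, exp (z * a) * H 0 a
  have e : z^4 * (q0/z + q1/z^2 + q2/z^3 + q3/z^4 + r + t) - (q3 + q2*z + q1*z^2 + q0*z^3) = (r + t) * z^4 := by
    field_simp; ring
  rw [e, abs_mul, abs_of_nonneg (by positivity : 0 ≤ z^4)]
  have : |r + t| ≤ |r| + t := by
    refine (abs_add_le _ _).trans ?_; rw [abs_of_nonneg I4]
  gcongr
  linarith

theorem tt_coeffs {H : Fin 4 → ℝ → ℝ} (h : TTChain H) (hne : ∃ a, 0 < H 0 a)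
    {q0 q1 q2 q3 C : ℝ} (hq : TTPoly H q0 q1 q2 q3 C) : 0 < q3 ∧ ∃ c2 : ℝ,
    q2 = q3 * (log 4 - eulerMascheroniConstant) ∧ q1 = q3 * ((log 4 - eulerMascheroniConstant)^2/2 + c2) ∧
    q0 = q3 * ((log 4 - eulerMascheroniConstant)^3/6 + (log 4 - eulerMascheroniConstant)*c2
      + (-(∑' n : ℕ, 1 / ((n : ℝ) + 1)^3)/48)) := by
  obtain ⟨A, B, hB, hG⟩ := tt_log_gamma_exp
  obtain ⟨K, hK⟩ := tt_mell_exp h hq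
  have hmp := tt_mell_pos h hne (tt_mell_int h hq 4 (by norm_num))
  have := tt_exp_match (p := log 4 - eulerMascheroniConstant) (c2 := A/4)
    (c3 := -(∑' n : ℕ, 1 / ((n : ℝ) + 1)^3)/48) (B := B/64)
    (E := fun z => z * log 4 + 4 * log (Gamma (1+z/4))) (by
      intro z hz hz1
      have := hG (z/4) (by linarith) (by linarith)
      rw [abs_le] at this ⊢
      constructor <;> linarith [this.1, this.2]) hK (m := ∫ a, exp (4 * a) * H 0 a) (by
      intro z hz
      rw [tt_mell_gamma h hne hq hz, exp_add]
      congr 2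
      have : 0 < Gamma (1 + z/4) := Gamma_pos_of_pos (by linarith)
      rw [← log_rpow this, exp_log (rpow_pos_of_pos this _)]
      norm_cast)
  obtain ⟨r3, r2, r1, r0⟩ := this
  rw [← r3] at hmp r2 r1 r0
  exact ⟨hmp, A/4, r2, r1, r0⟩

end p7s

noncomputable section p8s
open Asymptotics Topology

/-- exponentially small at minus infinity -/
def TTiny (f : ℝ → ℝ) : Prop := ∃ c : ℝ, 0 < c ∧ f =O[atBot] (fun s => exp (c * s))
/-- subexponential at minus infinity -/
def TSub (f : ℝ → ℝ) : Prop := ∀ δ : ℝ, 0 < δ → f =O[atBot] (fun s => exp (-(δ * s)))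

lemma tt_exp_O {c d : ℝ} (h : c ≤ d) : (fun s => exp (d * s)) =O[atBot] (fun s => exp (c * s)) := by
  refine IsBigO.of_bound 1 ?_
  filter_upwards [eventually_le_atBot 0] with s hs
  rw [norm_of_nonneg (exp_pos _).le, norm_of_nonneg (exp_pos _).le, one_mul, exp_le_exp]
  nlinarith

lemma TTiny.add {f g : ℝ → ℝ} (hf : TTiny f) (hg : TTiny g) : TTiny (fun s => f s + g s) := by
  obtain ⟨c, hc, h1⟩ := hf
  obtain ⟨d, hd, h2⟩ := hg
  exact ⟨min c d, lt_min hc hd, (h1.trans (tt_exp_O (min_le_left _ _))).add (h2.trans (tt_exp_O (min_le_right _ _)))⟩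

lemma TSub.add {f g : ℝ → ℝ} (hf : TSub f) (hg : TSub g) : TSub (fun s => f s + g s) :=
  fun δ hδ => (hf δ hδ).add (hg δ hδ)

lemma TSub.neg {f : ℝ → ℝ} (hf : TSub f) : TSub (fun s => -f s) :=
  fun δ hδ => (hf δ hδ).neg_left

lemma TSub.sub {f g : ℝ → ℝ} (hf : TSub f) (hg : TSub g) : TSub (fun s => f s - g s) :=
  fun δ hδ => (hf δ hδ).sub (hg δ hδ)

lemma TSub.mul {f g : ℝ → ℝ} (hf : TSub f) (hg : TSub g) : TSub (fun s => f s * g s) := by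
  intro δ hδ
  refine ((hf (δ/2) (by linarith)).mul (hg (δ/2) (by linarith))).congr_right fun s => ?_
  rw [← exp_add]; congr 1; ring

lemma TTiny.mul {f g : ℝ → ℝ} (hf : TTiny f) (hg : TSub g) : TTiny (fun s => f s * g s) := by
  obtain ⟨c, hc, h1⟩ := hf
  refine ⟨c/2, by linarith, (h1.mul (hg (c/2) (by linarith))).congr_right fun s => ?_⟩
  rw [← exp_add]; congr 1; ring

lemma TSub.of_O1 {f : ℝ → ℝ} (h : f =O[atBot] (fun _ => (1:ℝ))) : TSub f := by
  intro δ hδ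
  refine h.trans (IsBigO.of_bound 1 ?_)
  filter_upwards [eventually_le_atBot 0] with s hs
  rw [norm_of_nonneg (exp_pos _).le, one_mul, norm_one, one_le_exp_iff]
  nlinarith

lemma TSub.const (c : ℝ) : TSub (fun _ => c) := TSub.of_O1 (isBigO_const_const c one_ne_zero _)

lemma TSub.pow {f : ℝ → ℝ} (hf : TSub f) (n : ℕ) : TSub (fun s => f s ^ n) := by
  induction n with
  | zero => simpa using TSub.const 1
  | succ n ih => simpa [pow_succ] using ih.mul hf

lemma TSub.id : TSub (fun s => s) := by
  intro δ hδ
  have := tt_pow_exp 1 hδ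
  have h2 := this.isBigO_one ℝ
  have h3 := h2.mul (isBigO_refl (fun s => exp (-(δ*s))) atBot)
  simp only [one_mul] at h3
  refine h3.congr_left fun s => ?_
  rw [mul_right_comm, ← exp_add]; simp

lemma TSub.of_tendsto {f : ℝ → ℝ} {l : ℝ} (h : Tendsto f atBot (𝓝 l)) : TSub f :=
  TSub.of_O1 (h.isBigO_one ℝ)

lemma TTiny.congr {f g : ℝ → ℝ} (hf : TTiny f) (h : ∀ᶠ s in atBot, f s = g s) : TTiny g := by
  obtain ⟨c, hc, h1⟩ := hf
  exact ⟨c, hc, h1.congr' h (EventuallyEq.refl _ _)⟩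

lemma TTiny.congr' {f g : ℝ → ℝ} (hf : TTiny f) (h : ∀ s, f s = g s) : TTiny g :=
  hf.congr (Eventually.of_forall h)

lemma TTiny.tendsto {f : ℝ → ℝ} (hf : TTiny f) : Tendsto f atBot (𝓝 0) := by
  obtain ⟨c, hc, h1⟩ := hf
  exact h1.trans_tendsto (tendsto_exp_atBot.comp (tendsto_id.const_mul_atBot hc))

lemma TSub.exp_small {e : ℝ → ℝ} (h : Tendsto (fun s => e s / s) atBot (nhds 0)) : TSub (fun s => exp (e s)) := by
  intro δ hδ
  refine IsBigO.of_bound 1 ?_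
  filter_upwards [tt_small h hδ] with s hs
  rw [norm_of_nonneg (exp_pos _).le, norm_of_nonneg (exp_pos _).le, one_mul, exp_le_exp]
  exact (le_abs_self _).trans hs

/-- pointwise difference bounds -/
lemma tt_D {e0 e4 L N : ℝ → ℝ} (h : TTProf e0 e4 L N) {y : Fin 4 → ℝ → ℝ → ℝ}
    (hy : TTSec e0 e4 L N y) (hp : ∀ i a b, 0 ≤ y i a b) {H : Fin 4 → ℝ → ℝ} (hH : TTChain H)
    (hl : ∀ i a, Tendsto (y i a) atBot (nhds (H i a))) (hle : ∀ i a b, y i a b ≤ H i a)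
    {s0 : ℝ} (hb : TTBd e0 e4 L N s0) (a b : ℝ) (hab : a + b ≤ 2 * s0) :
    |y 1 a b - (H 1 a + L ((a+b)/2) * H 0 a)| ≤ (H 3 a * exp (-a) + H 0 a * exp (3*a)) * exp (3 * b) ∧
    |y 2 a b - (H 2 a + N ((a+b)/2) * H 1 a + ((N ((a+b)/2) - L ((a+b)/2)) * L ((a+b)/2)
      + exp (e4 ((a+b)/2) - 2 * e0 ((a+b)/2))) * H 0 a)| ≤
      ((H 3 a * exp (-a) + H 0 a * exp (3*a)) * exp (-a/2) + (H 1 a + H 0 a) * exp (5/2*a)) * exp (5/2 * b) := by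
  have hs : ∀ t ≤ 2*s0 - a, (a+t)/2 ≤ s0 := fun t ht => by linarith
  have hs' : ∀ t ≤ 2*s0 - a, (a+t)/2 ≤ 0 := fun t ht => (hs t ht).trans hb.neg
  have n0 := hH.nn 0 a
  have n1 := hH.nn 1 a
  have n3 := hH.nn 3 a
  have hmid : Tendsto (fun t : ℝ => (a+t)/2) atBot atBot :=
    (tendsto_atBot_add_const_left _ a tendsto_id).atBot_div_const (by norm_num)
  have tL := (tt_LN h).1.comp hmid
  have tN := (tt_LN h).2.comp hmid
  have tU := (tt_U0 h).comp hmid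
  simp only [Function.comp_def] at tL tN tU
  have D0 : ∀ t ≤ 2*s0 - a, |y 0 a t - H 0 a| ≤ (H 3 a * exp (-a/2)) / (7/2) * exp (7/2 * t) := by
    refine tt_tail0 (by norm_num) (D' := fun t => -(exp (4*t + 2 * e0 ((a+t)/2)) * y 3 a t))
      (fun t _ => (hy.b0 a t).sub_const _) ?_ ?_
    · intro t ht
      rw [abs_neg, abs_of_nonneg (mul_nonneg (exp_pos _).le (hp 3 a t))]
      have e1 : H 3 a * exp (-a/2) * exp (7/2*t) = exp (4*t - (a+t)/2) * H 3 a := by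
        rw [mul_assoc, ← exp_add, mul_comm]; congr 2; ring
      rw [e1]
      have := hb.E _ (hs t ht)
      have := hp 3 a t
      have := hle 3 a t
      gcongr
      linarith
    · simpa using (hl 0 a).sub_const (H 0 a)
  set K1 := H 3 a * exp (-a) + H 0 a * exp (3*a) with hK1
  have K1n : 0 ≤ K1 := by positivity
  have D1 : ∀ t ≤ 2*s0 - a, |y 1 a t - (H 1 a + L ((a+t)/2) * H 0 a)| ≤ K1 / 3 * exp (3 * t) := by
    refine tt_tail0 (by norm_num) (D' := fun t => -(exp (e4 ((a+t)/2) - 2 * e0 ((a+t)/2)) * (y 0 a t - H 0 a))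
        - exp (8 * ((a+t)/2) + 2 * e0 ((a+t)/2)) * H 0 a) ?_ ?_ ?_
    · intro t _
      have := (hy.b1 a t).sub (((hda_half' a t (h.hL _)).mul_const (H 0 a)).const_add (H 1 a))
      refine this.congr_deriv ?_
      ring
    · intro t ht
      refine (abs_sub _ _).trans ?_
      rw [abs_neg, abs_mul, abs_of_pos (exp_pos _), abs_of_nonneg (mul_nonneg (exp_pos _).le n0)]
      have b1 : exp (e4 ((a+t)/2) - 2 * e0 ((a+t)/2)) * |y 0 a t - H 0 a| ≤ exp (-((a+t)/2)) * ((H 3 a * exp (-a/2)) / (7/2) * exp (7/2 * t)) :=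
        mul_le_mul (hb.U _ (hs t ht)) (D0 t ht) (abs_nonneg _) (exp_pos _).le
      have b2 : exp (-((a+t)/2)) * ((H 3 a * exp (-a/2)) / (7/2) * exp (7/2 * t)) = (2/7) * (H 3 a * exp (-a) * exp (3*t)) := by
        have : exp (-a) * exp (3*t) = exp (-((a+t)/2)) * exp (-a/2) * exp (7/2*t) := by
          rw [← exp_add, ← exp_add, ← exp_add]; congr 1; ring
        rw [mul_assoc (H 3 a), this]; ring
      have b3 : exp (8 * ((a+t)/2) + 2 * e0 ((a+t)/2)) ≤ exp (3*a) * exp (3*t) := by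
        refine (hb.T _ (hs t ht)).trans ?_
        rw [← exp_add, exp_le_exp]
        linarith [hs' t ht]
      have b4 := mul_le_mul_of_nonneg_right b3 n0
      have b5 : 0 ≤ H 3 a * exp (-a) * exp (3*t) := by positivity
      rw [hK1]
      linarith
    · have := (hl 1 a).sub ((tL.mul_const (H 0 a)).const_add (H 1 a))
      simpa using this
  have D2 : ∀ t ≤ 2*s0 - a, |y 2 a t - (H 2 a + N ((a+t)/2) * H 1 a + ((N ((a+t)/2) - L ((a+t)/2)) * L ((a+t)/2)
      + exp (e4 ((a+t)/2) - 2 * e0 ((a+t)/2))) * H 0 a)| ≤ (K1 * exp (-a/2) + (H 1 a + H 0 a) * exp (5/2*a)) / (5/2) * exp (5/2 * t) := by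
    refine tt_tail0 (by norm_num) (D' := fun t => -(exp (2 * e0 ((a+t)/2) - 2 * e4 ((a+t)/2)) * (y 1 a t - (H 1 a + L ((a+t)/2) * H 0 a)))
        - exp (8 * ((a+t)/2) + 2 * e0 ((a+t)/2)) * (H 1 a + (N ((a+t)/2) - L ((a+t)/2)) * H 0 a)) ?_ ?_ ?_
    · intro t _
      have dL := hda_half' a t (h.hL _)
      have dN := hda_half' a t (h.hN _)
      have d0 := hda_half' a t (h.he0 _)
      have d4 := hda_half' a t (h.he4 _)
      have := (hy.b2 a t).sub (((dN.mul_const (H 1 a)).const_add (H 2 a)).add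
        ((((dN.sub dL).mul dL).add (d4.sub (d0.const_mul 2)).exp).mul_const (H 0 a)))
      refine this.congr_deriv ?_
      simp only [Pi.sub_apply]
      ring
    · intro t ht
      refine (abs_sub _ _).trans ?_
      rw [abs_neg, abs_mul, abs_mul, abs_of_pos (exp_pos _), abs_of_pos (exp_pos _)]
      have b1 : exp (2 * e0 ((a+t)/2) - 2 * e4 ((a+t)/2)) * |y 1 a t - (H 1 a + L ((a+t)/2) * H 0 a)| ≤ exp (-((a+t)/2)) * (K1 / 3 * exp (3 * t)) :=
        mul_le_mul (hb.V _ (hs t ht)) (D1 t ht) (abs_nonneg _) (exp_pos _).le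
      have b2 : exp (-((a+t)/2)) * (K1 / 3 * exp (3 * t)) = (1/3) * (K1 * exp (-a/2) * exp (5/2*t)) := by
        have : exp (-a/2) * exp (5/2*t) = exp (-((a+t)/2)) * exp (3*t) := by
          rw [← exp_add, ← exp_add]; congr 1; ring
        rw [mul_assoc K1, this]; ring
      have b3 : exp (8 * ((a+t)/2) + 2 * e0 ((a+t)/2)) ≤ exp (5/2*a) * exp (5/2*t) := by
        refine (hb.T _ (hs t ht)).trans ?_
        rw [← exp_add, exp_le_exp]
        linarith [hs' t ht]
      have b6 : |H 1 a + (N ((a+t)/2) - L ((a+t)/2)) * H 0 a| ≤ H 1 a + H 0 a := by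
        have l1 := abs_le.mp (hb.L _ (hs t ht))
        have l2 := abs_le.mp (hb.N _ (hs t ht))
        rw [abs_le]
        constructor <;> nlinarith [l1.1, l1.2, l2.1, l2.2]
      have b4 := mul_le_mul b3 b6 (abs_nonneg _) (by positivity)
      have b5 : 0 ≤ K1 * exp (-a/2) * exp (5/2*t) := by positivity
      linarith
    · have := (hl 2 a).sub (((tN.mul_const (H 1 a)).const_add (H 2 a)).add ((((tN.sub tL).mul tL).add tU).mul_const (H 0 a)))
      simpa using this
  have hbt : b ≤ 2*s0 - a := by linarith
  constructor
  · refine (D1 b hbt).trans ?_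
    gcongr
    linarith
  · refine (D2 b hbt).trans ?_
    gcongr
    rw [div_le_iff₀ (by norm_num)]
    have : 0 ≤ K1 * exp (-a/2) + (H 1 a + H 0 a) * exp (5/2*a) := by positivity
    linarith

end p8s

noncomputable section p9s
open Asymptotics Topology

lemma tt_D_tiny {e0 e4 L N : ℝ → ℝ} (h : TTProf e0 e4 L N) {y : Fin 4 → ℝ → ℝ → ℝ}
    (hy : TTSec e0 e4 L N y) (hp : ∀ i a b, 0 ≤ y i a b) {H : Fin 4 → ℝ → ℝ} (hH : TTChain H)
    (hl : ∀ i a, Tendsto (y i a) atBot (nhds (H i a))) (hle : ∀ i a b, y i a b ≤ H i a) (x : ℝ) :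
    TTiny (fun s => y 1 (s+x) (s-x) - (H 1 (s+x) + L s * H 0 (s+x))) ∧
    TTiny (fun s => y 2 (s+x) (s-x) - (H 2 (s+x) + N s * H 1 (s+x) + ((N s - L s) * L s
      + exp (e4 s - 2 * e0 s)) * H 0 (s+x))) := by
  obtain ⟨s0, hb⟩ := tt_bd h
  obtain ⟨C, hC, hg⟩ := tt_chain_growth hH (show (0:ℝ) < 1/4 by norm_num) (by norm_num)
  have key : ∀ s ≤ s0, s + x ≤ 0 → (H 3 (s+x) * exp (-(s+x)) + H 0 (s+x) * exp (3*(s+x))) ≤ 2 * C * exp (-(5/4*(s+x))) := by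
    intro s _ hx
    have g3 := hg 3 _ hx
    have g0 := hg 0 _ hx
    have e1 : exp (-(5/4*(s+x))) = exp (-(1/4*(s+x))) * exp (-(s+x)) := by rw [← exp_add]; congr 1; ring
    have e2 : exp (3*(s+x)) ≤ exp (-(s+x)) := by rw [exp_le_exp]; linarith
    have := hH.nn 0 (s+x)
    calc _ ≤ C * exp (-(1/4*(s+x))) * exp (-(s+x)) + C * exp (-(1/4*(s+x))) * exp (-(s+x)) := by gcongr
      _ = _ := by rw [e1]; ring
  have ev : ∀ᶠ s : ℝ in atBot, s ≤ s0 ∧ s + x ≤ 0 := by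
    filter_upwards [eventually_le_atBot s0, eventually_le_atBot (-x)] with s h1 h2
    exact ⟨h1, by linarith⟩
  constructor
  · refine ⟨7/4, by norm_num, IsBigO.of_bound (2 * C * exp (-(17/4*x))) ?_⟩
    filter_upwards [ev] with s hs
    have hD := (tt_D h hy hp hH hl hle hb (s+x) (s-x) (by linarith [hs.1])).1
    have e : (s + x + (s - x))/2 = s := by ring
    rw [e] at hD
    rw [norm_eq_abs, norm_of_nonneg (exp_pos _).le]
    refine hD.trans ((mul_le_mul_of_nonneg_right (key s hs.1 hs.2) (exp_pos _).le).trans (le_of_eq ?_))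
    rw [mul_assoc, mul_assoc (2*C), ← exp_add, ← exp_add]
    congr 2; ring
  · refine ⟨3/4, by norm_num, IsBigO.of_bound (4 * C * exp (-(17/4*x))) ?_⟩
    filter_upwards [ev] with s hs
    have hD := (tt_D h hy hp hH hl hle hb (s+x) (s-x) (by linarith [hs.1])).2
    have e : (s + x + (s - x))/2 = s := by ring
    rw [e] at hD
    rw [norm_eq_abs, norm_of_nonneg (exp_pos _).le]
    refine hD.trans ?_
    have k1 := mul_le_mul_of_nonneg_right (key s hs.1 hs.2) (exp_pos (-(s+x)/2)).le
    have g1 := hg 1 _ hs.2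
    have g0 := hg 0 _ hs.2
    have e1 : exp (-(5/4*(s+x))) * exp (-(s+x)/2) = exp (-(7/4*(s+x))) := by rw [← exp_add]; congr 1; ring
    have e2 : exp (-(1/4*(s+x))) * exp (5/2*(s+x)) ≤ exp (-(7/4*(s+x))) := by
      rw [← exp_add, exp_le_exp]; linarith [hs.2]
    have k2 : (H 1 (s+x) + H 0 (s+x)) * exp (5/2*(s+x)) ≤ 2 * C * exp (-(7/4*(s+x))) := by
      calc _ ≤ (C * exp (-(1/4*(s+x))) + C * exp (-(1/4*(s+x)))) * exp (5/2*(s+x)) := by gcongr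
        _ = 2 * C * (exp (-(1/4*(s+x))) * exp (5/2*(s+x))) := by ring
        _ ≤ _ := by gcongr
    rw [mul_assoc, e1] at k1
    have k3 := mul_le_mul_of_nonneg_right (add_le_add k1 k2) (exp_pos (5/2*(s-x))).le
    refine k3.trans (le_of_eq ?_)
    have e3 : exp (-(7/4*(s+x))) * exp (5/2*(s-x)) = exp (-(17/4*x)) * exp (3/4*s) := by
      rw [← exp_add, ← exp_add]; congr 1; ring
    linear_combination 4 * C * e3

lemma tt_shift_tiny {r : ℝ → ℝ} {C : ℝ} (h : ∀ a ≤ 0, |r a| ≤ C * exp (3*a)) (x : ℝ) :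
    TTiny (fun s => r (s+x)) := by
  refine ⟨3, by norm_num, IsBigO.of_bound (C * exp (3*x)) ?_⟩
  filter_upwards [eventually_le_atBot (-x)] with s hs
  rw [norm_eq_abs, norm_of_nonneg (exp_pos _).le]
  refine (h (s+x) (by linarith)).trans (le_of_eq ?_)
  rw [mul_assoc, ← exp_add]; congr 2; ring

lemma tt_subs {e0 e4 L N : ℝ → ℝ} (h : TTProf e0 e4 L N) :
    TSub L ∧ TSub N ∧ TSub (fun s => exp (e4 s - 2 * e0 s)) ∧ TSub (fun s => exp (e0 s - e4 s)) ∧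
    TSub (fun s => exp (e4 s - e0 s)) ∧ TSub (fun s => exp (-e0 s)) := by
  refine ⟨TSub.of_tendsto (tt_LN h).1, TSub.of_tendsto (tt_LN h).2, TSub.of_tendsto (tt_U0 h),
    TSub.exp_small ?_, TSub.exp_small ?_, TSub.exp_small ?_⟩
  · refine ((h.lim0.sub h.lim4).congr fun s => ?_).trans (by simp)
    ring
  · refine ((h.lim4.sub h.lim0).congr fun s => ?_).trans (by simp)
    ring
  · refine (h.lim0.neg.congr fun s => ?_).trans (by simp)
    ring

theorem tt_Q {e0 e4 L N : ℝ → ℝ} (h : TTProf e0 e4 L N) : ∃ α : ℝ, ∀ x : ℝ,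
    TTiny (fun s => 6 * (s - (log 4 - eulerMascheroniConstant) + x)
      - N s * (3 * (s - (log 4 - eulerMascheroniConstant) + x)^2 + α)
      + ((N s - L s) * L s + exp (e4 s - 2 * e0 s)) * ((s - (log 4 - eulerMascheroniConstant) + x)^3
        + α * (s - (log 4 - eulerMascheroniConstant) + x) + (∑' n : ℕ, 1 / ((n : ℝ) + 1)^3)/8)
      + exp (e0 s - e4 s) * (3 * (s - (log 4 - eulerMascheroniConstant) - x)^2 + α)
      - exp (e0 s - e4 s) * L s * ((s - (log 4 - eulerMascheroniConstant) - x)^3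
        + α * (s - (log 4 - eulerMascheroniConstant) - x) + (∑' n : ℕ, 1 / ((n : ℝ) + 1)^3)/8)) := by
  obtain ⟨y, hy, hp, hsum, hsym⟩ := tt_exists_sym h
  obtain ⟨H, hH, hl, hle⟩ := tt_H h hy hp
  have hne : 0 < ∑ i, H i 0 := hsum.trans_le (Finset.sum_le_sum fun i _ => hle i 0 0)
  obtain ⟨q0, q1, q2, q3, C, hq⟩ := tt_chain_poly hH
  obtain ⟨h3, c2, r2, r1, r0⟩ := tt_coeffs hH (tt_chain_ne hH hne) hq
  obtain ⟨sL, sN, sU, sρ, -, -⟩ := tt_subs h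
  refine ⟨6 * c2, fun x => ?_⟩
  have t1 := (tt_D_tiny h hy hp hH hl hle (-x)).1
  have t2 := (tt_D_tiny h hy hp hH hl hle x).2
  have a0 := tt_shift_tiny hq.p0 x
  have a1 := tt_shift_tiny hq.p1 x
  have a2 := tt_shift_tiny hq.p2 x
  have b0 := tt_shift_tiny hq.p0 (-x)
  have b1 := tt_shift_tiny hq.p1 (-x)
  have sΘ : TSub (fun s => (N s - L s) * L s + exp (e4 s - 2 * e0 s)) := ((sN.sub sL).mul sL).add sU
  have big := ((t2.add (t1.mul sρ.neg)).add ((a2.add (a1.mul sN)).add (a0.mul sΘ))).add ((b1.add (b0.mul sL)).mul sρ.neg)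
  have := big.mul (TSub.const (6/q3))
  refine this.congr' fun s => ?_
  have sy := hsym (s+x) (s-x)
  have e : (s + x + (s - x))/2 = s := by ring
  rw [e] at sy
  have f1 : s + -x = s - x := by ring
  have f2 : s - -x = s + x := by ring
  rw [f1, f2, sy]
  set p := log 4 - eulerMascheroniConstant
  rw [r2, r1, r0]
  field_simp
  ring

theorem tt_alg {L N U ρ ρi σ : ℝ → ℝ} {α β : ℝ} (sL : TSub L) (sN : TSub N) (sU : TSub U) (sρ : TSub ρ)
    (sρi : TSub ρi) (hρ : ∀ s, ρ s * ρi s = 1) (sσ : TSub σ) (hσ : ∀ᶠ s in atBot, σ s ≤ -1)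
    (hQ : ∀ x : ℝ, TTiny (fun s => 6 * (σ s + x) - N s * (3 * (σ s + x)^2 + α)
      + ((N s - L s) * L s + U s) * ((σ s + x)^3 + α * (σ s + x) + β)
      + ρ s * (3 * (σ s - x)^2 + α) - ρ s * L s * ((σ s - x)^3 + α * (σ s - x) + β))) :
    TTiny (fun s => ρ s * U s * (4 * σ s^3 + β) + 3) ∧
    TTiny (fun s => ρ s * σ s * (β - 2 * σ s^3) - (4 * σ s^3 + β)/2) := by
  have sc := TSub.const
  have q0 := hQ 0
  have q1 := hQ 1
  have qm := hQ (-1)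
  have q2 := hQ 2
  -- the cubic coefficient
  have c3 : TTiny (fun s => (N s - L s) * L s + U s + ρ s * L s) := by
    refine ((((q2.mul (sc (1/6))).add (q1.mul (sc (-1/2)))).add (q0.mul (sc (1/2)))).add (qm.mul (sc (-1/6)))).congr' fun s => ?_
    ring
  have c2 : TTiny (fun s => N s - ρ s * (1 - 2 * σ s * L s)) := by
    refine (((((q1.mul (sc (1/2))).add (qm.mul (sc (1/2)))).add (q0.mul (sc (-1)))).mul (sc (-1/3))).add (c3.mul sσ)).congr' fun s => ?_
    ring
  have c1 : TTiny (fun s => σ s * (N s + ρ s) - 1) := by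
    refine (((((q1.mul (sc (1/2))).add (qm.mul (sc (-1/2)))).add (c3.mul (sc (-1)))).mul (sc (-1/6))).add (c3.mul (((sσ.pow 2).mul (sc 3)).add (sc α) |>.mul (sc (1/6))))).congr' fun s => ?_
    ring
  have c0 : TTiny (fun s => 6 * σ s + ρ s * L s * (4 * σ s^3 - 2 * β)) := by
    refine ((q0.add (c2.mul (((sσ.pow 2).mul (sc 3)).add (sc α)))).add (c3.mul (((sσ.pow 3).add ((sσ.mul (sc α)).add (sc β))).mul (sc (-1))))).congr' fun s => ?_
    ring
  have i1 : TTiny (fun s => ρ s * σ s * (1 - σ s * L s) - 1/2) := by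
    refine ((c1.add (c2.mul (sσ.mul (sc (-1))))).mul (sc (1/2))).congr' fun s => ?_
    ring
  have i2 : TTiny (fun s => L s * (4 * σ s^3 + β) - 6 * σ s^2) := by
    refine (((c0.add (i1.mul (sσ.mul (sc 12)))).mul (sρi.mul (sc (-1/2))))).congr' fun s => ?_
    linear_combination (L s * (4 * σ s^3 + β) - 6 * σ s^2) * hρ s
  have i3 : TTiny (fun s => σ s * U s - (σ s * L s^2 - L s)) := by
    refine ((c3.mul sσ).add (c1.mul (sL.mul (sc (-1))))).congr' fun s => ?_
    ring
  have i4 : TTiny (fun s => σ s * (ρ s * U s * (4 * σ s^3 + β) + 3)) := by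
    refine (((i3.mul (sρ.mul (((sσ.pow 3).mul (sc 4)).add (sc β)))).add
      (i2.mul ((sρ.mul ((sσ.mul sL).sub (sc 1)))))).add (i1.mul (sσ.mul (sc (-6))))).congr' fun s => ?_
    ring
  have sσi : TSub (fun s => (σ s)⁻¹) := by
    refine TSub.of_O1 (IsBigO.of_bound 1 ?_)
    filter_upwards [hσ] with s hs
    rw [norm_inv, norm_one, mul_one, norm_eq_abs]
    refine inv_le_one_of_one_le₀ ?_
    rw [le_abs]; right; linarith
  constructor
  · refine (i4.mul sσi).congr ?_
    filter_upwards [hσ] with s hs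
    have : σ s ≠ 0 := by linarith
    field_simp
  · refine ((i1.mul (((sσ.pow 3).mul (sc 4)).add (sc β))).add (i2.mul (sρ.mul (sσ.pow 2)))).congr' fun s => ?_
    ring

theorem tt_log_lim {e P : ℝ → ℝ} (h : Tendsto (fun s => exp (-e s) * P s) atBot (𝓝 1)) :
    Tendsto (fun s => e s - log (P s)) atBot (𝓝 0) := by
  have h1 := (h.log one_ne_zero).neg
  rw [log_one, neg_zero] at h1
  refine h1.congr' ?_
  filter_upwards [h.eventually (lt_mem_nhds one_pos)] with s hs
  have : P s ≠ 0 := by rintro h0; rw [h0] at hs; simp at hs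
  rw [log_mul (exp_pos _).ne' this, log_exp]
  ring

theorem tt_final {e0 e4 L N : ℝ → ℝ} (h : TTProf e0 e4 L N) (β : ℝ)
    (hβ : β = (∑' n : ℕ, 1 / ((n : ℝ) + 1)^3)/8) {σ : ℝ → ℝ}
    (hσ : σ = fun s => s - (log 4 - eulerMascheroniConstant)) :
    Tendsto (fun s => e0 s - log (-(4 * σ s^3 + β)/3)) atBot (𝓝 0) ∧
    Tendsto (fun s => e4 s - log (2 * σ s / 3 * (2 * σ s^3 - β))) atBot (𝓝 0) := by
  obtain ⟨α, hQ⟩ := tt_Q h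
  obtain ⟨sL, sN, sU, sρ, sρi, sE⟩ := tt_subs h
  have sσ : TSub σ := by rw [hσ]; exact TSub.id.sub (TSub.const _)
  have evσ : ∀ᶠ s in atBot, σ s ≤ -1 := by
    rw [hσ]
    filter_upwards [eventually_le_atBot (-1 + (log 4 - eulerMascheroniConstant))] with s hs
    linarith
  obtain ⟨k1, k2⟩ := tt_alg (α := α) (β := β) sL sN sU sρ sρi (fun s => by rw [← exp_add]; simp) sσ evσ (by
    intro x
    rw [hσ, hβ]
    exact hQ x)
  have E : ∀ s, exp (e0 s - e4 s) * exp (e4 s - 2 * e0 s) = exp (-e0 s) := fun s => by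
    rw [← exp_add]; congr 1; ring
  have l3 : Tendsto (fun s => exp (-e0 s) * (-(4 * σ s^3 + β)/3)) atBot (𝓝 1) := by
    have := (k1.tendsto.const_mul (-1/3)).add_const 1
    simp only [mul_zero, zero_add] at this
    refine this.congr fun s => ?_
    rw [E]; ring
  refine ⟨tt_log_lim l3, tt_log_lim ?_⟩
  have := ((k2.mul sE).tendsto.const_mul (-2/3)).add l3
  simp only [mul_zero, zero_add] at this
  refine this.congr fun s => ?_
  have : exp (-e4 s) = exp (e0 s - e4 s) * exp (-e0 s) := by rw [← exp_add]; congr 1; ring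
  rw [this]
  ring

end p9s

section p10s
open Topology

lemma tt_c2 {w : ℝ → ℝ} (hw : ContDiffOn ℝ (⊤ : ℕ∞) w (Set.Ioi 0)) (r : ℝ) (hr : 0 < r) :
    HasDerivAt w (deriv w r) r ∧ HasDerivAt (deriv w) (deriv (deriv w) r) r := by
  have h1 : ContDiffOn ℝ 1 (deriv w) (Set.Ioi 0) := hw.deriv_of_isOpen isOpen_Ioi (by
    rw [show (1:WithTop ℕ∞) + 1 = ((2:ℕ∞) : WithTop ℕ∞) by norm_num]
    exact_mod_cast le_top)
  have hn : Set.Ioi (0:ℝ) ∈ 𝓝 r := Ioi_mem_nhds hr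
  exact ⟨((hw.contDiffAt hn).differentiableAt (by simp)).hasDerivAt,
    ((h1.contDiffAt hn).differentiableAt (by simp)).hasDerivAt⟩

lemma tt_prof_of {w0 w1 : ℝ → ℝ}
    (hsmooth0 : ContDiffOn ℝ (⊤ : ℕ∞) w0 (Set.Ioi 0)) (hsmooth1 : ContDiffOn ℝ (⊤ : ℕ∞) w1 (Set.Ioi 0))
    (hsol : IsRadialTTStar w0 w1)
    (hγ0lim : Tendsto (fun r => 2 * w0 r / Real.log r) (nhdsWithin 0 (Set.Ioi 0)) (nhds 3))
    (hγ1lim : Tendsto (fun r => 2 * w1 r / Real.log r) (nhdsWithin 0 (Set.Ioi 0)) (nhds 1)) :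
    TTProf (fun s => 2 * w0 (exp s) - 3 * s) (fun s => 2 * w0 (exp s) + 2 * w1 (exp s) - 4 * s)
      (fun s => exp s * deriv w0 (exp s) - 3/2)
      (fun s => exp s * deriv w0 (exp s) + exp s * deriv w1 (exp s) - 2) := by
  have d1 : ∀ {w : ℝ → ℝ} (_ : ContDiffOn ℝ (⊤ : ℕ∞) w (Set.Ioi 0)) (s : ℝ),
      HasDerivAt (fun s => w (exp s)) (exp s * deriv w (exp s)) s := by
    intro w hw s
    exact (((tt_c2 hw _ (exp_pos s)).1).comp s (hasDerivAt_exp s)).congr_deriv (by ring)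
  have d2 : ∀ {w : ℝ → ℝ} (_ : ContDiffOn ℝ (⊤ : ℕ∞) w (Set.Ioi 0)) (s : ℝ),
      HasDerivAt (fun s => exp s * deriv w (exp s))
        (2 * exp (2*s) * ((1/2) * deriv (deriv w) (exp s) + (1/(2*exp s)) * deriv w (exp s))) s := by
    intro w hw s
    have := (((tt_c2 hw _ (exp_pos s)).2).comp s (hasDerivAt_exp s))
    refine ((hasDerivAt_exp s).mul this).congr_deriv ?_
    have e : exp (2*s) = exp s * exp s := by rw [← exp_add]; congr 1; ring
    rw [e]
    have := (exp_pos s).ne'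
    simp only [Function.comp_apply]
    field_simp
    ring
  have te : Tendsto exp atBot (𝓝[>] 0) := tendsto_exp_atBot_nhdsGT
  have l0 := hγ0lim.comp te
  have l1 := hγ1lim.comp te
  simp only [Function.comp_def, log_exp] at l0 l1
  have ev : ∀ᶠ s : ℝ in atBot, s < 0 := eventually_lt_atBot 0
  constructor
  · intro s
    refine (((d1 hsmooth0 s).const_mul 2).sub ((hasDerivAt_id s).const_mul 3)).congr_deriv ?_
    ring
  · intro s
    refine ((((d1 hsmooth0 s).const_mul 2).add ((d1 hsmooth1 s).const_mul 2)).sub ((hasDerivAt_id s).const_mul 4)).congr_deriv ?_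
    ring
  · intro s
    refine ((d2 hsmooth0 s).sub_const _).congr_deriv ?_
    rw [(hsol _ (exp_pos s)).1, mul_assoc, mul_sub, ← exp_add, ← exp_add]
    congr 3 <;> ring
  · intro s
    refine (((d2 hsmooth0 s).add (d2 hsmooth1 s)).sub_const _).congr_deriv ?_
    rw [← mul_add, (hsol _ (exp_pos s)).1, (hsol _ (exp_pos s)).2, sub_add_sub_cancel, mul_assoc, mul_sub, ← exp_add, ← exp_add]
    congr 3 <;> ring
  · have := l0.sub_const 3
    rw [sub_self] at this
    refine this.congr' ?_
    filter_upwards [ev] with s hs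
    have hs' : s ≠ 0 := hs.ne
    field_simp
  · have := (l0.add l1).sub_const 4
    norm_num at this
    refine this.congr' ?_
    filter_upwards [ev] with s hs
    have hs' : s ≠ 0 := hs.ne
    field_simp

end p10s


/-- Fine structure near `r = 0` in the vertex case V1, `(γ0, γ1) = (3, 1)`: with `s = ln r`,
`2 w0(r) − 3 ln r − ln P3(s) → 0` and `2 w0(r) + 2 w1(r) − 4 ln r − ln P4(s) → 0`
as `r → 0⁺`. -/
theorem fine_structure_V1_case (w0 w1 : ℝ → ℝ)
    (hsmooth0 : ContDiffOn ℝ (⊤ : ℕ∞) w0 (Set.Ioi 0)) (hsmooth1 : ContDiffOn ℝ (⊤ : ℕ∞) w1 (Set.Ioi 0))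
    (hsol : IsRadialTTStar w0 w1)
    (hlim0 : Tendsto w0 atTop (nhds 0)) (hlim1 : Tendsto w1 atTop (nhds 0))
    (hγ0lim : Tendsto (fun r => 2 * w0 r / Real.log r) (nhdsWithin 0 (Set.Ioi 0)) (nhds 3))
    (hγ1lim : Tendsto (fun r => 2 * w1 r / Real.log r) (nhdsWithin 0 (Set.Ioi 0)) (nhds 1)) :
    Tendsto (fun r => 2 * w0 r - 3 * Real.log r - Real.log (P3V1 (Real.log r)))
        (nhdsWithin 0 (Set.Ioi 0)) (nhds 0) ∧
    Tendsto (fun r => 2 * w0 r + 2 * w1 r - 4 * Real.log r - Real.log (P4V1 (Real.log r)))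
        (nhdsWithin 0 (Set.Ioi 0)) (nhds 0) := by
  have hp := tt_prof_of hsmooth0 hsmooth1 hsol hγ0lim hγ1lim
  obtain ⟨k3, k4⟩ := tt_final hp _ rfl rfl
  have tl : Tendsto log (nhdsWithin 0 (Set.Ioi 0)) atBot := tendsto_log_nhdsGT_zero
  have ev : ∀ᶠ r : ℝ in nhdsWithin 0 (Set.Ioi 0), 0 < r := self_mem_nhdsWithin
  constructor
  · refine (k3.comp tl).congr' ?_
    filter_upwards [ev] with r hr
    simp only [Function.comp_apply, exp_log hr]
    congr 2
    rw [P3V1, zetaThree]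
    ring
  · refine (k4.comp tl).congr' ?_
    filter_upwards [ev] with r hr
    simp only [Function.comp_apply, exp_log hr]
    congr 2
    rw [P4V1, zetaThree]
    ring
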